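/- arXiv:2302.07461 — 9 statements merged into one kernel-verified Lean document; each statement's English description precedes it below -/
import Mathlib

section
/- Let k ≥ 3 be a fixed integer. If f : ℕ → ℂ is a multiplicative function satisfying f(a₁³ + a₂³ + ⋯ + a_k³) = f(a₁³) + f(a₂³) + ⋯ + f(a_k³) for all positive integers a₁, a₂, …, a_k, then f(n) = n for every positive integer n. -/
/-!
Write `g(a) = f(a³)`. Two representations of the same number as a sum of `r ≤ k` positive cubes give,
after padding with `1`s, an additive relation between values of `g`; only the relations with three
cubes on each side are needed to bring `g` down to finitely many unknowns.

* *The shape of `g`.* For every `N ≥ 15` there is an identity `N³ + b³ + c³ = d³ + e³ + u³` with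
  `0 < b, c, d, e, u < N` (`reducible_of_ge`): the property passes to multiples, and two linear
  families of identities cover `N ≡ ±1 mod 6`. Hence `g` is determined by its values at small
  arguments, and finitely many further relations leave only the four values `g(1), …, g(4)` free
  (`eq_zero_of_balanced`). There really are four independent solutions of the three-cube relations:
  `1`, `n³`, and the residues in `{-1, 0, 1}` of `n³` modulo `9` and modulo `7` (`chi9`, `chi7`).
  Therefore `g = A + B n³ + C chi9 + D chi7` (`exists_model`).
* *Multiplicativity.* Comparing `g(m · 1)` with `g(m (1 + 63 m))` shows that `B = 0` or `g(m) = m³` for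
  all `m`. If `B = 0`, the multiplicative relations at `10` and `21` force `g` to be `1`, `chi9` or `chi7`.
  The constant is impossible because some cube is a sum of `k` positive cubes; the other two are
  excluded by relations with four or five cubes, or for `k = 3, 4` by evaluating `f` at a product.
* *From cubes to all integers.* Now `f` is the identity on cubes and on sums of `k` positive cubes.
  For `n` coprime to `6`, Ryley's identity (`ryley`) shows that `n M³` is a sum of `k` positive cubes
  for some `M` coprime to `n`, so `f(n) = n`. Powers of `2` and then of `3` occur as exact divisors of
  suitable sums of `k` cubes, which settles the remaining cases.
-/

namespace CubesKAU

/-! ### The residues of a cube modulo 9 and modulo 7 -/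

/-- The representative in `{-1, 0, 1}` of `n³` modulo `9`. -/
def chi9 (n : ℕ) : ℤ := if n % 3 = 0 then 0 else if n % 3 = 1 then 1 else -1

/-- The representative in `{-1, 0, 1}` of `n³` modulo `7`. -/
def chi7 (n : ℕ) : ℤ :=
  if n % 7 = 0 then 0 else if n % 7 = 1 ∨ n % 7 = 2 ∨ n % 7 = 4 then 1 else -1

lemma chi9_bound (n : ℕ) : -1 ≤ chi9 n ∧ chi9 n ≤ 1 := by
  unfold chi9; split_ifs <;> simp

lemma chi7_bound (n : ℕ) : -1 ≤ chi7 n ∧ chi7 n ≤ 1 := by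
  unfold chi7; split_ifs <;> simp

lemma chi9_spec (n : ℕ) : ∃ q : ℤ, (n : ℤ) ^ 3 = 9 * q + chi9 n := by
  obtain ⟨m, r, hr, rfl⟩ : ∃ m r, r < 3 ∧ n = 3 * m + r :=
    ⟨n / 3, n % 3, Nat.mod_lt _ (by norm_num), (Nat.div_add_mod n 3).symm⟩
  have h : (3 * m + r) % 3 = r := by omega
  unfold chi9
  rw [h]
  interval_cases r
  · exact ⟨3 * m ^ 3, by push_cast; norm_num; ring⟩
  · exact ⟨3 * m ^ 3 + 3 * m ^ 2 + m, by norm_num; ring⟩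
  · exact ⟨3 * m ^ 3 + 6 * m ^ 2 + 4 * m + 1, by norm_num; ring⟩

lemma chi7_spec (n : ℕ) : ∃ q : ℤ, (n : ℤ) ^ 3 = 7 * q + chi7 n := by
  obtain ⟨m, r, hr, rfl⟩ : ∃ m r, r < 7 ∧ n = 7 * m + r :=
    ⟨n / 7, n % 7, Nat.mod_lt _ (by norm_num), (Nat.div_add_mod n 7).symm⟩
  have h : (7 * m + r) % 7 = r := by omega
  have key : ∃ t : ℤ, (r : ℤ) ^ 3 = 7 * t + chi7 (7 * m + r) := by
    unfold chi7
    rw [h]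
    interval_cases r
    · exact ⟨0, by norm_num⟩
    · exact ⟨0, by norm_num⟩
    · exact ⟨1, by norm_num⟩
    · exact ⟨4, by norm_num⟩
    · exact ⟨9, by norm_num⟩
    · exact ⟨18, by norm_num⟩
    · exact ⟨31, by norm_num⟩
  obtain ⟨t, ht⟩ := key
  refine ⟨49 * m ^ 3 + 21 * m ^ 2 * r + 3 * m * r ^ 2 + t, ?_⟩
  push_cast
  linear_combination ht

lemma chi9_balanced (a b c d e u : ℕ) (h : a ^ 3 + b ^ 3 + c ^ 3 = d ^ 3 + e ^ 3 + u ^ 3) :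
    chi9 a + chi9 b + chi9 c = chi9 d + chi9 e + chi9 u := by
  have h' : (a : ℤ) ^ 3 + b ^ 3 + c ^ 3 = d ^ 3 + e ^ 3 + u ^ 3 := by exact_mod_cast h
  obtain ⟨_, ha⟩ := chi9_spec a
  obtain ⟨_, hb⟩ := chi9_spec b
  obtain ⟨_, hc⟩ := chi9_spec c
  obtain ⟨_, hd⟩ := chi9_spec d
  obtain ⟨_, he⟩ := chi9_spec e
  obtain ⟨_, hu⟩ := chi9_spec u
  have := chi9_bound a
  have := chi9_bound b
  have := chi9_bound c
  have := chi9_bound d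
  have := chi9_bound e
  have := chi9_bound u
  rw [ha, hb, hc, hd, he, hu] at h'
  omega

lemma chi7_balanced (a b c d e u : ℕ) (h : a ^ 3 + b ^ 3 + c ^ 3 = d ^ 3 + e ^ 3 + u ^ 3) :
    chi7 a + chi7 b + chi7 c = chi7 d + chi7 e + chi7 u := by
  have h' : (a : ℤ) ^ 3 + b ^ 3 + c ^ 3 = d ^ 3 + e ^ 3 + u ^ 3 := by exact_mod_cast h
  obtain ⟨_, ha⟩ := chi7_spec a
  obtain ⟨_, hb⟩ := chi7_spec b
  obtain ⟨_, hc⟩ := chi7_spec c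
  obtain ⟨_, hd⟩ := chi7_spec d
  obtain ⟨_, he⟩ := chi7_spec e
  obtain ⟨_, hu⟩ := chi7_spec u
  have := chi7_bound a
  have := chi7_bound b
  have := chi7_bound c
  have := chi7_bound d
  have := chi7_bound e
  have := chi7_bound u
  rw [ha, hb, hc, hd, he, hu] at h'
  omega

lemma chi9_congr (m n : ℕ) (h : m % 63 = n % 63) : chi9 m = chi9 n := by
  have : m % 3 = n % 3 := by omega
  unfold chi9; rw [this]

lemma chi7_congr (m n : ℕ) (h : m % 63 = n % 63) : chi7 m = chi7 n := by
  have : m % 7 = n % 7 := by omega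
  unfold chi7; rw [this]

/-! ### Functions respecting all three-cube relations -/

/-- `h` takes equal sums on any two triples of positive integers with the same sum of cubes. -/
def Balanced (h : ℕ → ℂ) : Prop :=
  ∀ a b c d e u : ℕ, 0 < a → 0 < b → 0 < c → 0 < d → 0 < e → 0 < u →
    a ^ 3 + b ^ 3 + c ^ 3 = d ^ 3 + e ^ 3 + u ^ 3 → h a + h b + h c = h d + h e + h u

/-- `N` is the strictly largest entry of some three-cube relation between positive integers, so that
a balanced function is determined at `N` by smaller arguments. -/
def Reducible (N : ℕ) : Prop :=
  ∃ b c d e u : ℕ, (0 < b ∧ b < N) ∧ (0 < c ∧ c < N) ∧ (0 < d ∧ d < N) ∧ (0 < e ∧ e < N) ∧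
    (0 < u ∧ u < N) ∧ N ^ 3 + b ^ 3 + c ^ 3 = d ^ 3 + e ^ 3 + u ^ 3

lemma Reducible.mul {N : ℕ} (h : Reducible N) (t : ℕ) (ht : 0 < t) : Reducible (N * t) := by
  obtain ⟨b, c, d, e, u, hb, hc, hd, he, hu, heq⟩ := h
  refine ⟨b * t, c * t, d * t, e * t, u * t, ?_, ?_, ?_, ?_, ?_, ?_⟩
  on_goal 6 => simp only [mul_pow, ← add_mul, heq]
  all_goals
    exact ⟨Nat.mul_pos (by omega) ht, Nat.mul_lt_mul_of_pos_right (by omega) ht⟩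

lemma reducible_one_mod_six (j : ℕ) : Reducible (6 * j + 25) :=
  ⟨4 * j + 5, 11, 6 * j + 17, 4 * j + 23, 1, by omega, by omega, by omega, by omega, by omega,
    by ring⟩

lemma reducible_five_mod_six (j : ℕ) : Reducible (6 * j + 23) :=
  ⟨4 * j + 7, j + 12, 6 * j + 17, 4 * j + 21, j + 4, by omega, by omega, by omega, by omega,
    by omega, by ring⟩

lemma reducible_of_lt (N : ℕ) (h1 : 15 ≤ N) (h2 : N < 45) : Reducible N := by
  have r6 : Reducible 6 := ⟨3, 2, 5, 5, 1, by norm_num⟩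
  have r10 : Reducible 10 := ⟨2, 1, 9, 6, 4, by norm_num⟩
  have r11 : Reducible 11 := ⟨3, 2, 9, 8, 5, by norm_num⟩
  have r13 : Reducible 13 := ⟨6, 1, 12, 7, 7, by norm_num⟩
  have r15 : Reducible 15 := ⟨2, 2, 11, 11, 9, by norm_num⟩
  have r16 : Reducible 16 := ⟨2, 1, 15, 9, 1, by norm_num⟩
  have r17 : Reducible 17 := ⟨2, 1, 15, 11, 6, by norm_num⟩
  have r19 : Reducible 19 := ⟨2, 2, 15, 15, 5, by norm_num⟩
  have r21 : Reducible 21 := ⟨4, 3, 17, 16, 7, by norm_num⟩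
  have r27 : Reducible 27 := ⟨3, 3, 24, 17, 10, by norm_num⟩
  have r28 : Reducible 28 := ⟨7, 1, 22, 22, 10, by norm_num⟩
  interval_cases N
  · exact r15
  · exact r16
  · exact r17
  · exact r6.mul 3 (by norm_num)
  · exact r19
  · exact r10.mul 2 (by norm_num)
  · exact r21
  · exact r11.mul 2 (by norm_num)
  · exact reducible_five_mod_six 0
  · exact r6.mul 4 (by norm_num)
  · exact reducible_one_mod_six 0
  · exact r13.mul 2 (by norm_num)
  · exact r27
  · exact r28
  · exact reducible_five_mod_six 1
  · exact r6.mul 5 (by norm_num)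
  · exact reducible_one_mod_six 1
  · exact r16.mul 2 (by norm_num)
  · exact r11.mul 3 (by norm_num)
  · exact r17.mul 2 (by norm_num)
  · exact reducible_five_mod_six 2
  · exact r6.mul 6 (by norm_num)
  · exact reducible_one_mod_six 2
  · exact r19.mul 2 (by norm_num)
  · exact r13.mul 3 (by norm_num)
  · exact r10.mul 4 (by norm_num)
  · exact reducible_five_mod_six 3
  · exact r6.mul 7 (by norm_num)
  · exact reducible_one_mod_six 3
  · exact r11.mul 4 (by norm_num)

lemma reducible_of_ge (N : ℕ) (hN : 15 ≤ N) : Reducible N := by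
  induction N using Nat.strong_induction_on with
  | _ N ih =>
    by_cases h45 : N < 45
    · exact reducible_of_lt N hN h45
    rcases Nat.even_or_odd' N with ⟨m, rfl | rfl⟩
    · rw [mul_comm]
      exact (ih m (by omega) (by omega)).mul 2 (by norm_num)
    have h3 : (2 * m + 1) % 6 = 1 ∨ (2 * m + 1) % 6 = 3 ∨ (2 * m + 1) % 6 = 5 := by omega
    rcases h3 with h | h | h
    · obtain ⟨j, hj⟩ : ∃ j, 2 * m + 1 = 6 * j + 25 := ⟨(2 * m + 1 - 25) / 6, by omega⟩
      rw [hj]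
      exact reducible_one_mod_six j
    · obtain ⟨j, hj⟩ : ∃ j, 2 * m + 1 = j * 3 := ⟨(2 * m + 1) / 3, by omega⟩
      rw [hj]
      exact (ih j (by omega) (by omega)).mul 3 (by norm_num)
    · obtain ⟨j, hj⟩ : ∃ j, 2 * m + 1 = 6 * j + 23 := ⟨(2 * m + 1 - 23) / 6, by omega⟩
      rw [hj]
      exact reducible_five_mod_six j

/-- A balanced function is determined by its values at `1, 2, 3, 4`. -/
lemma eq_zero_of_balanced (h : ℕ → ℂ) (hb : Balanced h) (h1 : h 1 = 0) (h2 : h 2 = 0)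
    (h3 : h 3 = 0) (h4 : h 4 = 0) (n : ℕ) (hn : 0 < n) : h n = 0 := by
  induction n using Nat.strong_induction_on with
  | _ n ih =>
    by_cases h15 : 15 ≤ n
    · obtain ⟨b, c, d, e, u, hb', hc, hd, he, hu, heq⟩ := reducible_of_ge n h15
      have key := hb n b c d e u hn hb'.1 hc.1 hd.1 he.1 hu.1 heq
      rw [ih b hb'.2 hb'.1, ih c hc.2 hc.1, ih d hd.2 hd.1, ih e he.2 he.1, ih u hu.2 hu.1] at key
      simpa using key
    -- Eleven relations with entries at most `15`, of full rank in the unknowns `h 5, …, h 15`.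
    have e0 := hb 1 5 5 2 3 6 (by norm_num) (by norm_num) (by norm_num) (by norm_num) (by norm_num)
      (by norm_num) (by norm_num)
    have e1 := hb 1 2 10 4 6 9 (by norm_num) (by norm_num) (by norm_num) (by norm_num) (by norm_num)
      (by norm_num) (by norm_num)
    have e2 := hb 2 3 11 5 8 9 (by norm_num) (by norm_num) (by norm_num) (by norm_num) (by norm_num)
      (by norm_num) (by norm_num)
    have e3 := hb 1 9 9 4 4 11 (by norm_num) (by norm_num) (by norm_num) (by norm_num) (by norm_num)
      (by norm_num) (by norm_num)
    have e4 := hb 1 1 12 1 9 10 (by norm_num) (by norm_num) (by norm_num) (by norm_num)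
      (by norm_num) (by norm_num) (by norm_num)
    have e5 := hb 2 3 12 6 6 11 (by norm_num) (by norm_num) (by norm_num) (by norm_num)
      (by norm_num) (by norm_num) (by norm_num)
    have e6 := hb 1 6 13 7 7 12 (by norm_num) (by norm_num) (by norm_num) (by norm_num)
      (by norm_num) (by norm_num) (by norm_num)
    have e7 := hb 2 10 12 3 8 13 (by norm_num) (by norm_num) (by norm_num) (by norm_num)
      (by norm_num) (by norm_num) (by norm_num)
    have e8 := hb 2 2 15 9 11 11 (by norm_num) (by norm_num) (by norm_num) (by norm_num)
      (by norm_num) (by norm_num) (by norm_num)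
    have e9 := hb 1 6 15 4 11 13 (by norm_num) (by norm_num) (by norm_num) (by norm_num)
      (by norm_num) (by norm_num) (by norm_num)
    have e10 := hb 2 6 15 7 8 14 (by norm_num) (by norm_num) (by norm_num) (by norm_num)
      (by norm_num) (by norm_num) (by norm_num)
    rw [h1] at e0 e1 e3 e4 e6 e9
    rw [h2] at e0 e1 e2 e5 e7 e8 e10
    rw [h3] at e0 e2 e5 e7
    rw [h4] at e1 e3 e9
    have h6 : h 6 = 0 := by linear_combination e1 + e3 + e4 - e5
    have h5 : h 5 = 0 := by linear_combination (e0 + h6) / 2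
    have h8 : h 8 = 0 := by linear_combination 3 * e1 + 2 * e3 + 2 * e4 - e5 - e7 - e8 + e9
    have h9 : h 9 = 0 := by
      linear_combination e0 / 2 + 7 / 2 * e1 + e2 + 7 / 2 * e3 + 5 / 2 * e4 - 3 / 2 * e5 - e7 - e8
        + e9
    have h10 : h 10 = 0 := by linear_combination e1 + h6 + h9
    have h11 : h 11 = 0 := by linear_combination e2 + h5 + h8 + h9
    have h12 : h 12 = 0 := by linear_combination e4 + h9 + h10
    have h13 : h 13 = 0 := by linear_combination -e7 + h10 + h12 - h8
    have h7 : h 7 = 0 := by linear_combination (-e6 + h6 + h13 - h12) / 2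
    have h15' : h 15 = 0 := by linear_combination e8 + h9 + 2 * h11
    have h14 : h 14 = 0 := by linear_combination -e10 + h6 + h15' - h7 - h8
    interval_cases n <;> assumption

lemma exists_model (g : ℕ → ℂ) (hg : Balanced g) : ∃ A B C D : ℂ, ∀ n : ℕ, 0 < n →
    g n = A + B * (n : ℂ) ^ 3 + C * (chi9 n : ℂ) + D * (chi7 n : ℂ) := by
  -- The coefficients interpolating `g` at `1, 2, 3, 4`.
  obtain ⟨B, hB⟩ : ∃ B, B = (g 4 - g 1) / 63 := ⟨_, rfl⟩
  obtain ⟨C, hC⟩ : ∃ C, C = (g 1 - g 2 + 7 * B) / 2 := ⟨_, rfl⟩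
  obtain ⟨D, hD⟩ : ∃ D, D = (g 1 - C - g 3 + 26 * B) / 2 := ⟨_, rfl⟩
  obtain ⟨A, hA⟩ : ∃ A, A = g 1 - B - C - D := ⟨_, rfl⟩
  have c91 : chi9 1 = 1 := by decide
  have c92 : chi9 2 = -1 := by decide
  have c93 : chi9 3 = 0 := by decide
  have c94 : chi9 4 = 1 := by decide
  have c71 : chi7 1 = 1 := by decide
  have c72 : chi7 2 = 1 := by decide
  have c73 : chi7 3 = -1 := by decide
  have c74 : chi7 4 = 1 := by decide
  refine ⟨A, B, C, D, fun n hn => ?_⟩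
  have key := eq_zero_of_balanced
    (fun n => g n - (A + B * (n : ℂ) ^ 3 + C * (chi9 n : ℂ) + D * (chi7 n : ℂ)))
    ?_ ?_ ?_ ?_ ?_ n hn
  · exact sub_eq_zero.mp key
  · intro a b c d e u ha hb hc hd he hu heq
    have e1 := hg a b c d e u ha hb hc hd he hu heq
    have e2 : (a : ℂ) ^ 3 + b ^ 3 + c ^ 3 = d ^ 3 + e ^ 3 + u ^ 3 := by exact_mod_cast heq
    have e3 : (chi9 a : ℂ) + chi9 b + chi9 c = chi9 d + chi9 e + chi9 u := by
      exact_mod_cast chi9_balanced a b c d e u heq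
    have e4 : (chi7 a : ℂ) + chi7 b + chi7 c = chi7 d + chi7 e + chi7 u := by
      exact_mod_cast chi7_balanced a b c d e u heq
    linear_combination e1 - B * e2 - C * e3 - D * e4
  · simp only [c91, c71]
    push_cast
    linear_combination -hA
  · simp only [c92, c72]
    push_cast
    linear_combination -hA + 2 * hC
  · simp only [c93, c73]
    push_cast
    linear_combination -hA + 2 * hD
  · simp only [c94, c74]
    push_cast
    linear_combination -hA - 63 * hB

/-! ### Sums of `k` cubes as lists -/

/-- The hypothesis of the theorem, with lists of length `k` in place of functions on `Fin k`. -/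
def AdditiveOnCubes (k : ℕ) (f : ℕ → ℂ) : Prop :=
  ∀ l : List ℕ, l.length = k → (∀ x ∈ l, 0 < x) →
    f (l.map (· ^ 3)).sum = (l.map fun x => f (x ^ 3)).sum

lemma additiveOnCubes_of_fin {k : ℕ} {f : ℕ → ℂ}
    (hadd : ∀ a : Fin k → ℕ, (∀ i, 0 < a i) → f (∑ i, (a i) ^ 3) = ∑ i, f ((a i) ^ 3)) :
    AdditiveOnCubes k f := by
  rintro l rfl hl
  have := hadd l.get (fun i => hl _ (List.get_mem _ _))
  have e1 : ∑ i, (l.get i) ^ 3 = (l.map (· ^ 3)).sum := by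
    rw [← List.sum_ofFn]
    congr 1
    conv_rhs => rw [← List.ofFn_get l]
    rw [List.map_ofFn]; rfl
  have e2 : ∑ i, f ((l.get i) ^ 3) = (l.map fun x => f (x ^ 3)).sum := by
    rw [← List.sum_ofFn]
    congr 1
    conv_rhs => rw [← List.ofFn_get l]
    rw [List.map_ofFn]; rfl
  rw [← e1, ← e2]
  exact this

/-- Equal sums of `r ≤ k` positive cubes give equal sums of values, by padding with `1`s. -/
lemma balanced_lists {k : ℕ} {f : ℕ → ℂ} (H : AdditiveOnCubes k f) (l m : List ℕ)
    (hlm : l.length = m.length) (hk : l.length ≤ k) (hl : ∀ x ∈ l, 0 < x) (hm : ∀ x ∈ m, 0 < x)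
    (h : (l.map (· ^ 3)).sum = (m.map (· ^ 3)).sum) :
    (l.map fun x => f (x ^ 3)).sum = (m.map fun x => f (x ^ 3)).sum := by
  have e1 := H (l ++ List.replicate (k - l.length) 1) (by simp; omega) (by
    intro x hx
    rcases List.mem_append.mp hx with hx | hx
    · exact hl x hx
    · rw [List.eq_of_mem_replicate hx]; norm_num)
  have e2 := H (m ++ List.replicate (k - l.length) 1) (by simp; omega) (by
    intro x hx
    rcases List.mem_append.mp hx with hx | hx
    · exact hm x hx
    · rw [List.eq_of_mem_replicate hx]; norm_num)
  rw [List.map_append, List.sum_append] at e1 e2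
  rw [h, e2, List.map_append, List.map_append, List.sum_append, List.sum_append] at e1
  exact (add_right_cancel e1).symm

lemma balanced_cubes {k : ℕ} (hk : 3 ≤ k) {f : ℕ → ℂ} (H : AdditiveOnCubes k f) :
    Balanced (fun n => f (n ^ 3)) := by
  intro a b c d e u ha hb hc hd he hu heq
  have := balanced_lists H [a, b, c] [d, e, u] rfl hk (by simp [ha, hb, hc]) (by simp [hd, he, hu])
    (by simpa [← add_assoc] using heq)
  simpa [← add_assoc] using this

/-- Some cube is a sum of `k` positive cubes: start from `6³ = 3³ + 4³ + 5³` or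
`7³ = 1³ + 1³ + 5³ + 6³`, and repeatedly scale by `6` and split one term. -/
lemma exists_cube_eq_sum (k : ℕ) (hk : 3 ≤ k) : ∃ (l : List ℕ) (m : ℕ),
    l.length = k ∧ (∀ x ∈ l, 0 < x) ∧ 0 < m ∧ (l.map (· ^ 3)).sum = m ^ 3 := by
  induction k using Nat.strong_induction_on with
  | _ k ih =>
    by_cases h3 : k = 3
    · exact ⟨[3, 4, 5], 6, by simp [h3], by simp, by norm_num, by norm_num⟩
    by_cases h4 : k = 4
    · exact ⟨[1, 1, 5, 6], 7, by simp [h4], by simp, by norm_num, by norm_num⟩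
    obtain ⟨l, m, hl, hpos, hm, hsum⟩ := ih (k - 2) (by omega) (by omega)
    cases l with
    | nil => simp at hl; omega
    | cons x t =>
      refine ⟨3 * x :: 4 * x :: 5 * x :: t.map (6 * ·), 6 * m, ?_, ?_, by omega, ?_⟩
      · simp at hl ⊢; omega
      · simp at hpos ⊢
        exact ⟨hpos.1, hpos.2⟩
      · have e : ((t.map (6 * ·)).map (· ^ 3)).sum = 216 * (t.map (· ^ 3)).sum := by
          rw [List.map_map, ← List.sum_map_mul_left]
          congr 1
          apply List.map_congr_left
          intro y _
          simp [mul_pow]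
        simp only [List.map_cons, List.sum_cons] at hsum ⊢
        rw [e, mul_pow 6 m, ← hsum]
        ring

/-! ### The values at cubes -/

lemma map_cube {k : ℕ} (hk : 3 ≤ k) {f : ℕ → ℂ} (hf1 : f 1 = 1)
    (hmul : ∀ m n : ℕ, 0 < m → 0 < n → Nat.Coprime m n → f (m * n) = f m * f n)
    (H : AdditiveOnCubes k f) (m : ℕ) (hm : 0 < m) : f (m ^ 3) = (m : ℂ) ^ 3 := by
  obtain ⟨A, B, C, D, hg⟩ := exists_model _ (balanced_cubes hk H)
  have gmul : ∀ a b : ℕ, 0 < a → 0 < b → Nat.Coprime a b →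
      f ((a * b) ^ 3) = f (a ^ 3) * f (b ^ 3) := by
    intro a b ha hb hab
    rw [mul_pow]
    exact hmul _ _ (by positivity) (by positivity) (Nat.Coprime.pow 3 3 hab)
  have g1 : f (1 ^ 3) = 1 := by simpa using hf1
  by_cases hB : B = 0
  · exfalso
    subst hB
    have val : ∀ (n : ℕ) (x y : ℤ), 0 < n → chi9 n = x → chi7 n = y →
        f (n ^ 3) = A + C * x + D * y := by
      rintro n x y hn rfl rfl
      rw [hg n hn]; ring
    have v1 := val 1 1 1 (by norm_num) (by decide) (by decide)
    have v2 := val 2 (-1) 1 (by norm_num) (by decide) (by decide)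
    have v3 := val 3 0 (-1) (by norm_num) (by decide) (by decide)
    have v4 := val 4 1 1 (by norm_num) (by decide) (by decide)
    have v5 := val 5 (-1) (-1) (by norm_num) (by decide) (by decide)
    have v7 := val 7 1 0 (by norm_num) (by decide) (by decide)
    have v8 := val 8 (-1) 1 (by norm_num) (by decide) (by decide)
    have v10 := val 10 1 (-1) (by norm_num) (by decide) (by decide)
    have v21 := val 21 0 0 (by norm_num) (by decide) (by decide)
    have m10 := gmul 2 5 (by norm_num) (by norm_num) (by norm_num)
    have m21 := gmul 3 7 (by norm_num) (by norm_num) (by norm_num)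
    norm_num only at m10 m21 v1 v2 v3 v4 v5 v7 v8 v10 v21
    rw [v2, v5, v10] at m10
    rw [v3, v7, v21] at m21
    rw [hf1] at v1
    have hA : A = 1 - C - D := by linear_combination -v1
    subst hA
    have q1 : C * (1 - C - D) = 0 := by linear_combination m10 / 4
    have q2 : D * (2 * D + C - 2) = 0 := by linear_combination -m21
    have cases3 : (C = 0 ∧ D = 0) ∨ (C = 0 ∧ D = 1) ∨ (C = 1 ∧ D = 0) := by
      rcases mul_eq_zero.mp q1 with hC | hC
      · rcases mul_eq_zero.mp q2 with hD | hD
        · exact Or.inl ⟨hC, hD⟩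
        · exact Or.inr (Or.inl ⟨hC, by linear_combination (hD - hC) / 2⟩)
      · rcases mul_eq_zero.mp q2 with hD | hD
        · exact Or.inr (Or.inr ⟨by linear_combination -hC - hD, hD⟩)
        · exact Or.inr (Or.inl ⟨by linear_combination -2 * hC - hD, by linear_combination hC + hD⟩)
    rcases cases3 with ⟨rfl, rfl⟩ | ⟨rfl, rfl⟩ | ⟨rfl, rfl⟩
    · -- `g = 1`: a cube which is a sum of `k` cubes gives `1 = k`.
      have hone : ∀ n : ℕ, 0 < n → f (n ^ 3) = 1 := by
        intro n hn; rw [hg n hn]; ring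
      obtain ⟨l, m, hl, hpos, hm, hsum⟩ := exists_cube_eq_sum k hk
      have := H l hl hpos
      rw [hsum, hone m hm, List.map_congr_left (fun x hx => hone x (hpos x hx))] at this
      simp [hl] at this
      have : k = 1 := by exact_mod_cast this.symm
      omega
    · -- `g = chi7`: four residues `1` would balance three residues `-1`, as `4 ≡ -3 mod 7`;
      -- for `k = 3` use `408 = 3 * 136`.
      by_cases h4 : 4 ≤ k
      · have := balanced_lists H [1, 1, 2, 8] [3, 3, 5, 7] rfl h4 (by simp) (by simp) (by norm_num)
        norm_num [v2, v3, v5, v7, v8, hf1] at this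
      · obtain rfl : k = 3 := by omega
        have e1 := H [1, 1, 1] rfl (by simp)
        have e2 := H [2, 4, 4] rfl (by simp)
        have e3 := H [1, 4, 7] rfl (by simp)
        have e4 := hmul 3 136 (by norm_num) (by norm_num) (by norm_num)
        norm_num [v2, v3, v4, v5, v7, v8, hf1] at e1 e2 e3 e4
        norm_num [e1, e2, e3] at e4
    · -- `g = chi9`: sums `4` and `-5` of five residues are confused modulo `9`;
      -- for `k = 4` use `44 = 4 * 11`, for `k = 3` use `129 = 3 * 43`.
      by_cases h5 : 5 ≤ k
      · have := balanced_lists H [1, 1, 3, 4, 4] [2, 2, 2, 2, 5] rfl h5 (by simp) (by simp)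
          (by norm_num)
        norm_num [v2, v3, v4, v5, hf1] at this
      by_cases h4 : k = 4
      · subst h4
        have e1 := H [1, 1, 1, 1] rfl (by simp)
        have e2 := H [1, 1, 1, 2] rfl (by simp)
        have e3 := H [1, 2, 2, 3] rfl (by simp)
        have e4 := hmul 4 11 (by norm_num) (by norm_num) (by norm_num)
        norm_num [v2, v3, hf1] at e1 e2 e3 e4
        norm_num [e1, e2, e3] at e4
      · obtain rfl : k = 3 := by omega
        have e1 := H [1, 1, 1] rfl (by simp)
        have e2 := H [2, 2, 3] rfl (by simp)
        have e3 := H [1, 4, 4] rfl (by simp)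
        have e4 := hmul 3 43 (by norm_num) (by norm_num) (by norm_num)
        norm_num [v2, v3, v4, hf1] at e1 e2 e3 e4
        norm_num [e1, e2, e3] at e4
  · -- `1` and `1 + 63 m` agree modulo `63`, so only the term `B n³` sees the difference.
    have hcop : Nat.Coprime m (1 + 63 * m) := by simp
    have e := gmul m (1 + 63 * m) hm (by omega) hcop
    have mod1 : (m * (1 + 63 * m)) % 63 = m % 63 := by
      rw [show m * (1 + 63 * m) = m + 63 * (m * m) by ring]; omega
    have mod2 : (1 + 63 * m) % 63 = 1 % 63 := by omega
    have gm := hg m hm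
    have gone := hg 1 (by norm_num)
    have gA := hg (m * (1 + 63 * m)) (by positivity)
    have gB := hg (1 + 63 * m) (by omega)
    rw [chi9_congr _ _ mod1, chi7_congr _ _ mod1] at gA
    rw [chi9_congr _ _ mod2, chi7_congr _ _ mod2] at gB
    rw [g1] at gone
    push_cast at gone gA gB
    have eA : f ((m * (1 + 63 * m)) ^ 3)
        = f (m ^ 3) + B * (m : ℂ) ^ 3 * ((1 + 63 * m) ^ 3 - 1) := by
      rw [gA, gm]; ring
    have eB : f ((1 + 63 * m) ^ 3) = 1 + B * ((1 + 63 * (m : ℂ)) ^ 3 - 1) := by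
      rw [gB]; linear_combination -gone
    rw [eA, eB] at e
    have hne : (1 + 63 * (m : ℂ)) ^ 3 - 1 ≠ 0 := by
      have : 1 < (1 + 63 * m) ^ 3 := Nat.one_lt_pow (by norm_num) (by omega)
      rw [sub_ne_zero]
      exact_mod_cast this.ne'
    have hfin : B * ((1 + 63 * (m : ℂ)) ^ 3 - 1) * (f (m ^ 3) - (m : ℂ) ^ 3) = 0 := by
      linear_combination -e
    exact sub_eq_zero.mp ((mul_eq_zero.mp hfin).resolve_left (mul_ne_zero hB hne))

/-! ### Ryley's identity and integers coprime to 6 -/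

/-- A quantitative form of Ryley's theorem that positive rationals are sums of three positive
rational cubes, with control of the denominator `M`. With `P = 3 R a³`, `Q = b³` and `S = P + Q`,
the identity is
`(S³ - 12 P Q (P - Q))³ + (12 P Q (P - Q))³ + (12 P Q S - S³)³ = 72 P Q² S⁶ = R (6 a b² S²)³`,
and the three bases are positive when `3/2 ≤ P / Q ≤ 2`. -/
lemma ryley (n R : ℕ) (hn : 0 < n) (h6 : Nat.Coprime n 6) (hR : 0 < R) (hd : n ∣ R) :
    ∃ M x y z : ℕ, 0 < M ∧ 0 < x ∧ 0 < y ∧ 0 < z ∧ Nat.Coprime n M ∧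
      x ^ 3 + y ^ 3 + z ^ 3 = R * M ^ 3 := by
  obtain ⟨a, ha⟩ : ∃ a, a = 1 + n * 20 := ⟨_, rfl⟩
  obtain ⟨P, hP⟩ : ∃ P, P = 3 * R * a ^ 3 := ⟨_, rfl⟩
  have hPpos : 0 < P := by rw [hP, ha]; positivity
  have ha20 : (n * 20) ^ 3 ≤ a ^ 3 := Nat.pow_le_pow_left (by omega) 3
  have hPa : 3 * (n * 20) ^ 3 ≤ P := by
    rw [hP]
    calc 3 * (n * 20) ^ 3 ≤ 3 * a ^ 3 := by omega
      _ ≤ 3 * R * a ^ 3 := Nat.mul_le_mul_right _ (by omega)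
  -- The least `b ≡ 1 mod n` with `P ≤ 2 b³` also satisfies `3 b³ ≤ 2 P`, as `a` is large.
  obtain ⟨i, hb1, hb2⟩ : ∃ i, P ≤ 2 * (1 + n * i) ^ 3 ∧ 3 * (1 + n * i) ^ 3 ≤ 2 * P := by
    have hex : ∃ j, P ≤ 2 * (1 + n * j) ^ 3 := by
      refine ⟨P, ?_⟩
      have h1 : P ≤ 1 + n * P := by nlinarith
      have h2 : 1 + n * P ≤ (1 + n * P) ^ 3 := Nat.le_self_pow (by norm_num) _
      omega
    classical
    have hspec := Nat.find_spec hex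
    have hmin := @Nat.find_min _ _ hex
    obtain ⟨j, hj⟩ : ∃ j, j = Nat.find hex := ⟨_, rfl⟩
    rw [← hj] at hspec hmin
    refine ⟨j, hspec, ?_⟩
    have hn3 : 1 ≤ n ^ 3 := Nat.one_le_pow _ _ hn
    cases j with
    | zero =>
      exfalso
      have : 3 * (n * 20) ^ 3 = 24000 * n ^ 3 := by ring
      simp at hspec
      omega
    | succ i =>
      have hi := hmin (Nat.lt_succ_self i)
      push Not at hi
      obtain ⟨c, hc⟩ : ∃ c, c = 1 + n * i := ⟨_, rfl⟩
      rw [← hc] at hi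
      rw [show 1 + n * (i + 1) = c + n by rw [hc]; ring]
      rcases le_total (10 * n) c with h | h
      · have : 10 * (c + n) ≤ 11 * c := by omega
        have := Nat.pow_le_pow_left this 3
        rw [mul_pow, mul_pow] at this
        omega
      · have : c + n ≤ 11 * n := by omega
        have := Nat.pow_le_pow_left this 3
        rw [mul_pow] at this
        have h2 : 3 * (n * 20) ^ 3 = 24000 * n ^ 3 := by ring
        omega
  obtain ⟨b, hb⟩ : ∃ b, b = 1 + n * i := ⟨_, rfl⟩
  rw [← hb] at hb1 hb2
  obtain ⟨Q, hQ⟩ : ∃ Q, Q = b ^ 3 := ⟨_, rfl⟩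
  rw [← hQ] at hb1 hb2
  have hQpos : 0 < Q := by omega
  have hapos : 0 < a := by omega
  have hbpos : 0 < b := by omega
  have copa : Nat.Coprime n a := by rw [ha]; simp
  have copb : Nat.Coprime n b := by rw [hb]; simp
  have copS : Nat.Coprime n (P + Q) := by
    obtain ⟨R', rfl⟩ := hd
    have e : P + Q = Q + n * (3 * R' * a ^ 3) := by rw [hP]; ring
    rw [e, Nat.coprime_add_mul_left_right, hQ]
    exact copb.pow_right 3
  have hxy : 12 * P * Q * (P - Q) < (P + Q) ^ 3 := by
    obtain ⟨t, ht⟩ : ∃ t, P = Q + t := ⟨P - Q, by omega⟩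
    have : P - Q = t := by omega
    rw [this, ht]
    obtain ⟨s, hs⟩ : ∃ s, Q = t + s := ⟨Q - t, by omega⟩
    rw [hs]
    have hs2 : s ≤ t := by omega
    have htpos : 0 < t := by omega
    have : 0 < t ^ 3 := by positivity
    zify at *
    nlinarith [mul_nonneg (Int.natCast_nonneg t) (mul_self_nonneg (s : ℤ)),
      mul_nonneg (Int.natCast_nonneg s) (mul_self_nonneg (t : ℤ)),
      mul_nonneg (Int.natCast_nonneg s) (mul_self_nonneg (s : ℤ))]
  have hz : (P + Q) ^ 3 < 12 * P * Q * (P + Q) := by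
    have : (P + Q) ^ 2 < 12 * P * Q := by nlinarith
    calc (P + Q) ^ 3 = (P + Q) ^ 2 * (P + Q) := by ring
      _ < 12 * P * Q * (P + Q) := Nat.mul_lt_mul_of_pos_right this (by omega)
  have hPQ : Q < P := by omega
  refine ⟨6 * a * b ^ 2 * (P + Q) ^ 2, (P + Q) ^ 3 - 12 * P * Q * (P - Q), 12 * P * Q * (P - Q),
    12 * P * Q * (P + Q) - (P + Q) ^ 3, by positivity, by omega, ?_, by omega, ?_, ?_⟩
  · have : 0 < P - Q := by omega
    positivity
  · exact ((h6.mul_right copa).mul_right (copb.pow_right 2)).mul_right (copS.pow_right 2)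
  · zify [hxy.le, hz.le, hPQ.le]
    have hP' : (P : ℤ) = 3 * R * a ^ 3 := by exact_mod_cast hP
    have hQ' : (Q : ℤ) = b ^ 3 := by exact_mod_cast hQ
    have e : (R : ℤ) * (6 * a * b ^ 2 * (P + Q) ^ 2) ^ 3 = 72 * P * Q ^ 2 * (P + Q) ^ 6 := by
      rw [hP', hQ']; ring
    rw [e]; ring

/-- If `f` is the identity on `n * v` and on the cofactor `v`, it is so on `n`. -/
lemma cancel {f : ℕ → ℂ}
    (hmul : ∀ m n : ℕ, 0 < m → 0 < n → Nat.Coprime m n → f (m * n) = f m * f n)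
    (n v : ℕ) (hn : 0 < n) (hv : 0 < v) (hc : Nat.Coprime n v) (h1 : f (n * v) = (n * v : ℕ))
    (h2 : f v = v) : f n = n := by
  rw [hmul n v hn hv hc, h2] at h1
  push_cast at h1
  exact mul_right_cancel₀ (by exact_mod_cast hv.ne') h1

lemma map_coprime_six {k : ℕ} (hk : 3 ≤ k) {f : ℕ → ℂ}
    (hmul : ∀ m n : ℕ, 0 < m → 0 < n → Nat.Coprime m n → f (m * n) = f m * f n)
    (hcube : ∀ m : ℕ, 0 < m → f (m ^ 3) = (m : ℂ) ^ 3)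
    (hS : ∀ l : List ℕ, l.length = k → (∀ x ∈ l, 0 < x) →
      f (l.map (· ^ 3)).sum = ((l.map (· ^ 3)).sum : ℕ))
    (n : ℕ) (hn : 0 < n) (h6 : Nat.Coprime n 6) : f n = n := by
  -- `n m³ = R + (k - 3) n³` with `R > 0` divisible by `n`, and `R` is treated by Ryley's identity.
  obtain ⟨m, hm⟩ : ∃ m, m = 1 + n * k := ⟨_, rfl⟩
  obtain ⟨j, rfl⟩ : ∃ j, k = j + 3 := ⟨k - 3, by omega⟩
  have hlt : j * n ^ 2 < m ^ 3 := by
    have h1 : n ^ 2 ≤ m ^ 2 := Nat.pow_le_pow_left (by rw [hm]; nlinarith) 2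
    have h2 : j < m := by rw [hm]; nlinarith
    calc j * n ^ 2 ≤ j * m ^ 2 := Nat.mul_le_mul_left _ h1
      _ < m * m ^ 2 := Nat.mul_lt_mul_of_pos_right h2 (by rw [hm]; positivity)
      _ = m ^ 3 := by ring
  obtain ⟨w, hw⟩ : ∃ w, m ^ 3 = j * n ^ 2 + w := ⟨m ^ 3 - j * n ^ 2, by omega⟩
  have hwpos : 0 < w := by omega
  obtain ⟨M, x, y, z, hM, hx, hy, hz, hcop, heq⟩ :=
    ryley n (n * w) hn h6 (by positivity) (Dvd.intro _ rfl)
  have e := hS (x :: y :: z :: List.replicate j (n * M)) (by simp) (by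
    intro t ht
    simp only [List.mem_cons] at ht
    rcases ht with rfl | rfl | rfl | ht
    · exact hx
    · exact hy
    · exact hz
    · rw [List.eq_of_mem_replicate ht]; positivity)
  have esum : ((x :: y :: z :: List.replicate j (n * M)).map (· ^ 3)).sum = n * (m * M) ^ 3 := by
    simp only [List.map_cons, List.sum_cons, List.map_replicate, List.sum_replicate, smul_eq_mul]
    rw [mul_pow m M, hw]
    linear_combination heq
  rw [esum] at e
  have hmpos : 0 < m := by omega
  have copm : Nat.Coprime n m := by rw [hm]; simp
  refine cancel hmul n ((m * M) ^ 3) hn (by positivity) ((copm.mul_right hcop).pow_right 3) e ?_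
  rw [hcube _ (by positivity)]
  push_cast
  rfl

/-! ### Powers of 2 and 3 -/

lemma map_all {k : ℕ} (hk : 3 ≤ k) {f : ℕ → ℂ}
    (hmul : ∀ m n : ℕ, 0 < m → 0 < n → Nat.Coprime m n → f (m * n) = f m * f n)
    (hcube : ∀ m : ℕ, 0 < m → f (m ^ 3) = (m : ℂ) ^ 3)
    (hS : ∀ l : List ℕ, l.length = k → (∀ x ∈ l, 0 < x) →
      f (l.map (· ^ 3)).sum = ((l.map (· ^ 3)).sum : ℕ))
    (n : ℕ) (hn : 0 < n) : f n = n := by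
  have K6 := map_coprime_six hk hmul hcube hS
  -- Cubes padded with `k - length` copies of a fixed cube.
  have pad : ∀ (l : List ℕ) (c : ℕ), l.length ≤ k → (∀ x ∈ l, 0 < x) → 0 < c →
      f ((l.map (· ^ 3)).sum + (k - l.length) * c ^ 3)
        = ((l.map (· ^ 3)).sum + (k - l.length) * c ^ 3 : ℕ) := by
    intro l c hl hpos hc
    have := hS (l ++ List.replicate (k - l.length) c) (by simp; omega) (by
      intro x hx
      rcases List.mem_append.mp hx with hx | hx
      · exact hpos x hx
      · rw [List.eq_of_mem_replicate hx]; exact hc)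
    simpa using this
  have split3 : ∀ (p e : ℕ), 0 < p → (∀ j, f (p ^ (3 * j + 1)) = (p ^ (3 * j + 1) : ℕ)) →
      (∀ j, f (p ^ (3 * j + 2)) = (p ^ (3 * j + 2) : ℕ)) → f (p ^ e) = (p ^ e : ℕ) := by
    intro p e hp h1 h2
    obtain ⟨j, rfl | rfl | rfl⟩ : ∃ j, e = 3 * j ∨ e = 3 * j + 1 ∨ e = 3 * j + 2 :=
      ⟨e / 3, by omega⟩
    · rw [mul_comm, pow_mul, hcube _ (by positivity)]
      push_cast
      rfl
    · exact h1 j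
    · exact h2 j
  have P2 : ∀ e, f (2 ^ e) = (2 ^ e : ℕ) := by
    intro e
    apply split3 2 e (by norm_num)
    · intro j
      have hpad := pad [2 ^ j, 2 ^ j] (6 * 2 ^ j) (by simp; omega) (by simp) (by positivity)
      have e1 : ([2 ^ j, 2 ^ j].map (· ^ 3)).sum + (k - [2 ^ j, 2 ^ j].length) * (6 * 2 ^ j) ^ 3
          = 2 ^ (3 * j + 1) * (1 + 108 * (k - 2)) := by
        simp; ring
      rw [e1] at hpad
      have c2 : Nat.Coprime (1 + 108 * (k - 2)) 6 := by
        rw [show 1 + 108 * (k - 2) = 1 + 6 * (18 * (k - 2)) by ring]; simp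
      exact cancel hmul _ _ (by positivity) (by omega)
        (Nat.Coprime.pow_left _ (c2.coprime_dvd_right (by norm_num)).symm) hpad (K6 _ (by omega) c2)
    · intro j
      have hpad := pad [2 ^ j, 3 * 2 ^ j] (6 * 2 ^ j) (by simp; omega) (by simp) (by positivity)
      have e1 : ([2 ^ j, 3 * 2 ^ j].map (· ^ 3)).sum
          + (k - [2 ^ j, 3 * 2 ^ j].length) * (6 * 2 ^ j) ^ 3
          = 2 ^ (3 * j + 2) * (7 + 54 * (k - 2)) := by
        simp; ring
      rw [e1] at hpad
      have c2 : Nat.Coprime (7 + 54 * (k - 2)) 6 := by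
        rw [show 7 + 54 * (k - 2) = 1 + 6 * (1 + 9 * (k - 2)) by ring]; simp
      exact cancel hmul _ _ (by positivity) (by omega)
        (Nat.Coprime.pow_left _ (c2.coprime_dvd_right (by norm_num)).symm) hpad (K6 _ (by omega) c2)
  have K3 : ∀ v, 0 < v → Nat.Coprime v 3 → f v = v := by
    intro v hv h3
    obtain ⟨e, u, hu, rfl⟩ := Nat.exists_eq_two_pow_mul_odd hv.ne'
    have hu2 : Nat.Coprime u 2 := Nat.coprime_two_right.mpr hu
    have hu3 : Nat.Coprime u 3 := h3.coprime_dvd_left (Dvd.intro_left _ rfl)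
    have hu0 : 0 < u := hu.pos
    rw [hmul _ _ (by positivity) hu0 (Nat.Coprime.pow_left _ hu2.symm), P2,
      K6 u hu0 (Nat.Coprime.mul_right hu2 hu3)]
    push_cast
    rfl
  have P3 : ∀ e, f (3 ^ e) = (3 ^ e : ℕ) := by
    intro e
    apply split3 3 e (by norm_num)
    · intro j
      have hpad := pad [3 ^ j, 3 ^ j, 3 ^ j] (3 * 3 ^ j) (by simp; omega) (by simp) (by positivity)
      have e1 : ([3 ^ j, 3 ^ j, 3 ^ j].map (· ^ 3)).sum
          + (k - [3 ^ j, 3 ^ j, 3 ^ j].length) * (3 * 3 ^ j) ^ 3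
          = 3 ^ (3 * j + 1) * (1 + 9 * (k - 3)) := by
        simp; ring
      rw [e1] at hpad
      have c2 : Nat.Coprime (1 + 9 * (k - 3)) 3 := by
        rw [show 1 + 9 * (k - 3) = 1 + 3 * (3 * (k - 3)) by ring]; simp
      exact cancel hmul _ _ (by positivity) (by omega)
        (Nat.Coprime.pow_left _ c2.symm) hpad (K3 _ (by omega) c2)
    · intro j
      have hpad := pad [3 ^ j, 2 * 3 ^ j] (3 * 3 ^ j) (by simp; omega) (by simp) (by positivity)
      have e1 : ([3 ^ j, 2 * 3 ^ j].map (· ^ 3)).sum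
          + (k - [3 ^ j, 2 * 3 ^ j].length) * (3 * 3 ^ j) ^ 3
          = 3 ^ (3 * j + 2) * (1 + 3 * (k - 2)) := by
        simp; ring
      rw [e1] at hpad
      have c2 : Nat.Coprime (1 + 3 * (k - 2)) 3 := by simp
      exact cancel hmul _ _ (by positivity) (by omega)
        (Nat.Coprime.pow_left _ c2.symm) hpad (K3 _ (by omega) c2)
  obtain ⟨e, u, hu, rfl⟩ := Nat.exists_eq_pow_mul_and_not_dvd hn.ne' 3 (by norm_num)
  have hu3 : Nat.Coprime u 3 := ((Nat.Prime.coprime_iff_not_dvd Nat.prime_three).mpr hu).symm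
  have hu0 : 0 < u := Nat.pos_of_ne_zero (by rintro rfl; simp at hu)
  rw [hmul _ _ (by positivity) hu0 (Nat.Coprime.pow_left _ hu3.symm), P3, K3 u hu0 hu3]
  push_cast
  rfl

end CubesKAU

open CubesKAU in
theorem cubes_kAU (k : ℕ) (hk : 3 ≤ k) (f : ℕ → ℂ)
    (hf1 : f 1 = 1)
    (hmul : ∀ m n : ℕ, 0 < m → 0 < n → Nat.Coprime m n → f (m * n) = f m * f n)
    (hadd : ∀ a : Fin k → ℕ, (∀ i, 0 < a i) →
      f (∑ i, (a i) ^ 3) = ∑ i, f ((a i) ^ 3)) :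
    ∀ n : ℕ, 0 < n → f n = n := by
  have H := additiveOnCubes_of_fin hadd
  have hcube := map_cube hk hf1 hmul H
  intro n hn
  refine map_all hk hmul hcube (fun l hl hpos => ?_) n hn
  rw [H l hl hpos, List.map_congr_left (fun x hx => hcube x (hpos x hx)), Nat.cast_list_sum,
    List.map_map]
  congr 1
  apply List.map_congr_left
  intro x _
  simp
end

section
/- If f : ℕ → ℂ is a multiplicative function satisfying f(a³ + b³) = f(a³) + f(b³) for all positive integers a, b, then f(n) = n for every positive integer n such that it is not the case that 3 divides n and 9 does not divide n (i.e., f(n) = n unless n is exactly divisible by 3). -/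
/-!
For coprime `b, c` with `3 ∤ 2b + c`, the two sums `(b + c)³ + b³ = (2b + c) Q` and
`(b + c)³ + c³ = (b + 2c) Q` share the factor `Q = b² + bc + c²`, which is coprime to both linear
factors. Hence `f (2b + c) f Q = f ((b + c)³) + f (b³)` and
`f (b + 2c) f Q = f ((b + c)³) + f (c³)`, and `f Q` can be eliminated. This is used in two ways.

* If `f` is the identity on the three cubes, then `f (b + 2c) = b + 2c` implies
  `f (2b + c) = 2b + c` (`step`). With `c = 1` or `c = 2` this is a descent, which shows that
  `f m = m` for `3 ∤ m`, `m ≤ 2n - 3`, as soon as `f (j³) = j³` for all `j < n` (`values_below`).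
* If `f` is the identity at `b³`, `c³`, `2b + c`, `b + 2c` and `b ≠ c`, then
  `f ((b + c)³) = (b + c)³` (`cube_step`). For `n ≥ 7` and `3 ∤ n` take `(b, c) = (3, n - 3)`; for
  a power `n ≥ 9` of `3` take `(4, n - 4)`. The linear factors are then at most `2n - 3`, so
  strong induction gives `f (n³) = n³` for all `n` (`cubes`).

The induction starts from `f 4` and the cubes of `2, 3, 4, 5`, which are found by elimination from
finitely many instances of the hypotheses (`base_alg`, `base_values`). Finally `3ᵏ` with `k ≥ 2` is
read off from `1 + (3ᵏ⁻¹ - 1)³`, which is `3ᵏ` times a number prime to `3` (`three_pow`).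
-/

/-- `f` is multiplicative and additive on sums of two positive cubes. -/
structure CubeAdditive (f : ℕ → ℂ) : Prop where
  one : f 1 = 1
  mul : ∀ m n : ℕ, 0 < m → 0 < n → Nat.Coprime m n → f (m * n) = f m * f n
  add : ∀ a b : ℕ, 0 < a → 0 < b → f (a ^ 3 + b ^ 3) = f (a ^ 3) + f (b ^ 3)

/-! ### Two sums of cubes sharing a quadratic factor -/

theorem coprime_quad {b c : ℕ} (h : Nat.Coprime b c) (h3 : ¬ 3 ∣ 2 * b + c) :
    Nat.Coprime (2 * b + c) (b ^ 2 + b * c + c ^ 2) := by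
  apply Nat.coprime_of_dvd
  intro p hp hs hq
  have h1 : p ∣ 3 * c ^ 2 := by
    zify at hs hq ⊢
    have e : (3 * c ^ 2 : ℤ) = 4 * (b ^ 2 + b * c + c ^ 2) - (2 * b + c) * (2 * b + c) := by ring
    rw [e]
    exact (hq.mul_left 4).sub (hs.mul_left (2 * b + c))
  rcases hp.dvd_mul.mp h1 with h2 | h2
  · rw [(Nat.prime_dvd_prime_iff_eq hp Nat.prime_three).mp h2] at hs
    exact h3 hs
  have hc := hp.dvd_of_dvd_pow h2
  have hb : p ∣ b := by
    apply hp.dvd_of_dvd_pow (n := 2)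
    zify at hq hc ⊢
    have e : (b ^ 2 : ℤ) = (b ^ 2 + b * c + c ^ 2) - (b + c) * c := by ring
    rw [e]
    exact hq.sub (hc.mul_left (b + c))
  exact Nat.not_coprime_of_dvd_of_dvd hp.one_lt hb hc h

namespace CubeAdditive

variable {f : ℕ → ℂ}

/-- `(b + c)³ + b³ = (2b + c)(b² + bc + c²)`, with coprime factors. -/
theorem factor_sum (H : CubeAdditive f) {b c : ℕ} (hb : 0 < b) (hc : 0 < c)
    (h : Nat.Coprime b c)
    (h3 : ¬ 3 ∣ 2 * b + c) :
    f (2 * b + c) * f (b ^ 2 + b * c + c ^ 2) = f ((b + c) ^ 3) + f (b ^ 3) := by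
  rw [← H.add _ _ (by omega) hb, ← H.mul _ _ (by omega) (by positivity) (coprime_quad h h3)]
  congr 1
  ring

/-- The same quadratic factor as in `factor_sum`, from `(b + c)³ + c³`. -/
theorem factor_sum' (H : CubeAdditive f) {b c : ℕ} (hb : 0 < b) (hc : 0 < c)
    (h : Nat.Coprime b c)
    (h3 : ¬ 3 ∣ 2 * b + c) :
    f (b + 2 * c) * f (b ^ 2 + b * c + c ^ 2) = f ((b + c) ^ 3) + f (c ^ 3) := by
  have := factor_sum H hc hb h.symm (by omega)
  convert this using 3 <;> ring

/-- Dividing `factor_sum` by `factor_sum'` transfers the value of `f` from `b + 2c` to `2b + c`. -/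
theorem step (H : CubeAdditive f) {b c : ℕ} (hb : 0 < b) (hc : 0 < c)
    (h : Nat.Coprime b c)
    (h3 : ¬ 3 ∣ 2 * b + c) (gb : f (b ^ 3) = b ^ 3) (gc : f (c ^ 3) = c ^ 3)
    (gs : f ((b + c) ^ 3) = (b + c) ^ 3) (hs : f (b + 2 * c) = b + 2 * c) :
    f (2 * b + c) = 2 * b + c := by
  have e1 := factor_sum H hb hc h h3
  have e2 := factor_sum' H hb hc h h3
  rw [gs, gb] at e1
  rw [gs, gc, hs] at e2
  have n1 : (b + 2 * c : ℂ) ≠ 0 := by norm_cast; omega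
  have n2 : (b ^ 2 + b * c + c ^ 2 : ℂ) ≠ 0 := by norm_cast; positivity
  have hQ : f (b ^ 2 + b * c + c ^ 2) = b ^ 2 + b * c + c ^ 2 := by
    apply mul_left_cancel₀ n1
    linear_combination e2
  rw [hQ] at e1
  apply mul_right_cancel₀ n2
  linear_combination e1

/-- The difference of `factor_sum` and `factor_sum'` determines the value of `f` at the common
quadratic factor, hence at the cube of `b + c`. -/
theorem cube_step (H : CubeAdditive f) {b c : ℕ} (hb : 0 < b) (hc : 0 < c) (hbc : b ≠ c)
    (h : Nat.Coprime b c)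
    (h3 : ¬ 3 ∣ 2 * b + c) (gb : f (b ^ 3) = b ^ 3) (gc : f (c ^ 3) = c ^ 3)
    (h1 : f (2 * b + c) = 2 * b + c) (h2 : f (b + 2 * c) = b + 2 * c) :
    f ((b + c) ^ 3) = (b + c) ^ 3 := by
  have e1 := factor_sum H hb hc h h3
  have e2 := factor_sum' H hb hc h h3
  rw [h1, gb] at e1
  rw [h2, gc] at e2
  have n1 : (b - c : ℂ) ≠ 0 := sub_ne_zero.mpr (by exact_mod_cast hbc)
  have hQ : f (b ^ 2 + b * c + c ^ 2) = b ^ 2 + b * c + c ^ 2 := by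
    apply mul_left_cancel₀ n1
    linear_combination e1 - e2
  rw [hQ] at e1
  linear_combination -e1

/-- Knowing `f` on the cubes of the numbers below `n` gives `f` on all `m ≤ 2n - 3` prime to `3`.
The descent is `step` with `2b + 1 ↦ b + 2` for odd `m` and `4i ↦ 2i + 3` for `4 ∣ m`. -/
theorem values_below (H : CubeAdditive f) {n : ℕ} (f2 : f 2 = 2) (f4 : f 4 = 4)
    (hg : ∀ j, 0 < j → j < n → f (j ^ 3) = j ^ 3) (m : ℕ) (hm : 0 < m) (h3 : ¬ 3 ∣ m)
    (hmn : m + 3 ≤ 2 * n) : f m = m := by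
  induction m using Nat.strong_induction_on with
  | _ m ih =>
  have hcases : m = 1 ∨ m = 2 ∨ m = 4 ∨ (∃ b, 2 ≤ b ∧ m = 2 * b + 1) ∨
      (∃ i, 1 ≤ i ∧ m = 2 * (2 * i + 1)) ∨ ∃ i, 1 ≤ i ∧ m = 2 * (2 * i + 1) + 2 := by
    by_cases h1 : m % 2 = 1
    · by_cases h2 : m = 1
      · exact Or.inl h2
      · exact Or.inr <| Or.inr <| Or.inr <| Or.inl ⟨m / 2, by omega, by omega⟩
    · by_cases h2 : m = 2
      · exact Or.inr <| Or.inl h2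
      by_cases h4 : m = 4
      · exact Or.inr <| Or.inr <| Or.inl h4
      by_cases h5 : m % 4 = 2
      · exact Or.inr <| Or.inr <| Or.inr <| Or.inr <| Or.inl ⟨m / 4, by omega, by omega⟩
      · exact Or.inr <| Or.inr <| Or.inr <| Or.inr <| Or.inr ⟨m / 4 - 1, by omega, by omega⟩
  rcases hcases with rfl | rfl | rfl | ⟨b, hb, rfl⟩ | ⟨i, hi, rfl⟩ | ⟨i, hi, rfl⟩
  · simpa using H.one
  · simpa using f2
  · simpa using f4
  · have gs := hg (b + 1) (by omega) (by omega)
    have hs := ih (b + 2 * 1) (by omega) (by omega) (by omega) (by omega)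
    push_cast at gs hs
    have := H.step (b := b) (c := 1) (by omega) one_pos (Nat.coprime_one_right b) h3
      (hg b (by omega) (by omega)) (by simpa using H.one) (by exact_mod_cast gs)
      (by exact_mod_cast hs)
    exact_mod_cast this
  · rw [H.mul 2 (2 * i + 1) two_pos (by omega) (by simp), f2,
      ih (2 * i + 1) (by omega) (by omega) (by omega) (by omega)]
    push_cast
    ring
  · have gs := hg (2 * i + 1 + 2) (by omega) (by omega)
    have hs := ih (2 * i + 1 + 2 * 2) (by omega) (by omega) (by omega) (by omega)
    have := H.step (b := 2 * i + 1) (c := 2) (by omega) two_pos (by simp) h3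
      (hg _ (by omega) (by omega)) (hg 2 two_pos (by omega)) (by exact_mod_cast gs)
      (by exact_mod_cast hs)
    exact_mod_cast this

/-! ### The values at small cubes -/

end CubeAdditive

/-- Excludes the roots of the cubic factor of the eliminant in `base_alg`: modulo the cubic,
`y` and `z` are the polynomials `-1 - x - x²` and `-x/2 - x²` in `x`, which contradicts `he`. -/
theorem cubic_case {x y z : ℂ} (p : 2 * x ^ 3 + 3 * x ^ 2 + x + 1 = 0)
    (hA : (4 * x ^ 3 + 11 * x ^ 2 + 5 * x + 1) * y
      = (x + 1) * ((x ^ 2 - x + 1) * (2 * x ^ 2 + 2 * x + 3)))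
    (hz : z * (y - 2 - 2 * x) = x ^ 2 - 1)
    (he : z ^ 2 * (1 + x ^ 2) = (x + y) * (y + x ^ 2)) : False := by
  have hy : y = -1 - x - x ^ 2 := by clear hz he; grind
  subst hy
  have hz' : z = - x / 2 - x ^ 2 := by clear hA he; grind
  subst hz'
  clear hA hz
  grind

/-- The system satisfied by `x = f 8`, `y = f 27`, `z = f 7`, `w = f 125`, `u = f 4`, `v = f 5`,
`t = f 13`, `r = f 19`, `k = f 343`, `l = f 43` has only the expected solution. Eliminating
`w`, `r`, `z` and then `y` leaves
`(x - 8) (x + 1)³ (2x - 1) (x² - x + 1) (2x³ + 3x² + x + 1) = 0`, apart from the degenerate case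
`x = 1`; every root other than `8` contradicts one of the remaining equations. -/
theorem base_alg {x y z w u v t r k l : ℂ}
    (e1 : u * z = 1 + y) (e2 : v * z = x + y) (e3 : v * t = 1 + x ^ 2)
    (e4 : z * t = y + x ^ 2) (e5 : 2 * z * (1 + x) = 1 + w) (e6 : z * r = x + w)
    (e7 : x * r = y + w) (e8 : y * z = x ^ 2 + w) (e9 : y * r = 1 + x ^ 3)
    (e10 : x * l = 1 + k) (e11 : t * l = x * y + k) (e12 : (1 + x) * v * r = k + x ^ 3)
    (e13 : y * t = x + k) : x = 8 ∧ y = 27 ∧ w = 125 ∧ u = 4 := by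
  have hz : z * (y - 2 - 2 * x) = x ^ 2 - 1 := by linear_combination e8 - e5
  have ha : y ^ 2 * (1 + z) = x + x ^ 4 + x ^ 2 * y := by
    linear_combination x * e9 - y * e7 + y * e8
  have hb : z * (y ^ 2 - 1 - x ^ 3) = x * y * (x - 1) := by
    linear_combination y * e8 + z * e9 - y * e6
  have he : z ^ 2 * (1 + x ^ 2) = (x + y) * (y + x ^ 2) := by
    linear_combination z * t * e2 + (x + y) * e4 - z ^ 2 * e3
  have hx1 : x ≠ 1 := by
    rintro rfl
    -- Here `(y, z) = (-1, 0)` satisfies all the equations that do not involve `k` and `l`;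
    -- the cube of `7` is needed to exclude it.
    have h1 : z = 0 := by
      clear he ha e1 e2 e3 e4 e5 e6 e7 e8 e9 e10 e11 e12 e13
      grind
    subst h1
    have h2 : (1 + y) ^ 2 = 0 := by linear_combination -he
    obtain rfl : y = -1 := by linear_combination pow_eq_zero_iff two_ne_zero |>.mp h2
    obtain rfl : w = -1 := by linear_combination -e8
    obtain rfl : r = -2 := by linear_combination e7
    obtain rfl : l = 1 + k := by linear_combination e10
    obtain rfl : t = -1 - k := by linear_combination -e13
    have hk : k * (k + 3) = 0 := by linear_combination -e11
    rcases mul_eq_zero.mp hk with rfl | hk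
    · have : (7 : ℂ) = 0 := by linear_combination -4 * e3 + e12
      norm_num at this
    · obtain rfl : k = -3 := by linear_combination hk
      have : (2 : ℂ) = 0 := by linear_combination -2 * e3 - e12
      norm_num at this
  have hx2 : x ≠ -1 := by
    rintro rfl
    obtain rfl : y = 0 := by linear_combination (y * hz - hb)/2
    obtain rfl : w = -1 := by linear_combination -e8
    obtain rfl : r = 1 := by linear_combination -e7
    obtain rfl : z = -2 := by linear_combination e6
    norm_num at he
  -- `hF` and `hG` come from eliminating `z`; `hA` is `hG` reduced modulo `hF`, linear in `y`.
  have hF : y ^ 2 + 2 * x * (1 + x) * y = (x + 1) * (1 + x ^ 3) := by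
    have : x - 1 ≠ 0 := sub_ne_zero.mpr hx1
    apply mul_left_cancel₀ this
    linear_combination (y - 2 - 2 * x) * hb - (y ^ 2 - 1 - x ^ 3) * hz
  have hG : y ^ 2 * (y - 2 - 2 * x + x ^ 2 - 1) = (x + x ^ 4 + x ^ 2 * y) * (y - 2 - 2 * x) := by
    linear_combination (y - 2 - 2 * x) * ha - y ^ 2 * hz
  have hx2' : x + 1 ≠ 0 := fun h => hx2 (by linear_combination h)
  have hA : (4 * x ^ 3 + 11 * x ^ 2 + 5 * x + 1) * y
      = (x + 1) * ((x ^ 2 - x + 1) * (2 * x ^ 2 + 2 * x + 3)) := by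
    apply mul_left_cancel₀ hx2'
    linear_combination hG - (y - (2 * x ^ 2 + 4 * x + 3)) * hF
  have hR : (x - 8) * ((2 * x - 1) * ((x ^ 2 - x + 1) * (2 * x ^ 3 + 3 * x ^ 2 + x + 1))) = 0 := by
    apply mul_left_cancel₀ (pow_ne_zero 3 hx2')
    set A := 4 * x ^ 3 + 11 * x ^ 2 + 5 * x + 1 with hAdef
    set E := (x + 1) * ((x ^ 2 - x + 1) * (2 * x ^ 2 + 2 * x + 3)) with hEdef
    have key : E ^ 2 + 2 * x * (1 + x) * A * E = A ^ 2 * ((x + 1) * (1 + x ^ 3)) := by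
      linear_combination A ^ 2 * hF - (A * y + E + 2 * x * (1 + x) * A) * hA
    rw [hAdef, hEdef] at key
    linear_combination key
  rcases mul_eq_zero.mp hR with h | hR
  · obtain rfl : x = 8 := by linear_combination h
    obtain rfl : y = 27 := by linear_combination hA / 2793
    obtain rfl : z = 7 := by linear_combination hz / 9
    exact ⟨rfl, rfl, by linear_combination -e8, by linear_combination e1 / 7⟩
  exfalso
  rcases mul_eq_zero.mp hR with h | hR
  · obtain rfl : x = 1 / 2 := by linear_combination h / 2
    obtain rfl : y = 3 / 4 := by linear_combination hA * (4 / 27)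
    obtain rfl : z = 1 / 3 := by linear_combination -hz * (4 / 9)
    norm_num at he
  rcases mul_eq_zero.mp hR with h | h
  · have h3 : x ^ 3 = -1 := by linear_combination (x + 1) * h
    have hy : y = 0 := by
      clear hR hF hG he ha hb e1 e2 e3 e4 e5 e6 e7 e8 e9 e10 e11 e12 e13 hz
      grind
    subst hy
    have hz' : z = (1 - x) / 2 := by
      apply mul_left_cancel₀ hx2'
      linear_combination - hz / 2
    subst hz'
    clear hR hF hG ha hb e1 e2 e3 e4 e5 e6 e7 e8 e9 e10 e11 e12 e13 hz hA
    grind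
  · exact cubic_case h hA hz he

namespace CubeAdditive

variable {f : ℕ → ℂ}

theorem two (H : CubeAdditive f) : f 2 = 2 := by
  have := H.add 1 1 one_pos one_pos
  norm_num [H.one] at this
  exact this

theorem base_values (H : CubeAdditive f) :
    f 8 = 8 ∧ f 27 = 27 ∧ f 64 = 64 ∧ f 125 = 125 ∧ f 4 = 4 := by
  have f1 := H.one
  have f2 := H.two
  have m (a b : ℕ) (ha : 0 < a) (hb : 0 < b) (hab : Nat.Coprime a b) :
      f a * f b = f (a * b) := (H.mul a b ha hb hab).symm
  have s (a b : ℕ) (ha : 0 < a) (hb : 0 < b) := H.add a b ha hb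
  have f9 : f 9 = 1 + f 8 := by
    have := s 1 2 (by norm_num) (by norm_num)
    norm_num [f1] at this
    exact this
  have f64 : f 64 = f 8 ^ 2 := by
    have h1 := s 2 4 (by norm_num) (by norm_num)
    have h2 := m 8 9 (by norm_num) (by norm_num) (by norm_num)
    norm_num at h1 h2
    linear_combination -h1 - h2 + f 8 * f9
  have f512 : f 512 = f 8 ^ 3 := by
    have h1 := s 4 8 (by norm_num) (by norm_num)
    have h2 := m 64 9 (by norm_num) (by norm_num) (by norm_num)
    norm_num at h1 h2
    linear_combination -h1 - h2 + f 64 * f9 + f 8 * f64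
  have f216 : f 216 = f 8 * f 27 := by
    have h2 := m 8 27 (by norm_num) (by norm_num) (by norm_num)
    norm_num at h2
    exact h2.symm
  have e1 : f 4 * f 7 = 1 + f 27 := by
    have h1 := s 1 3 (by norm_num) (by norm_num)
    have h2 := m 4 7 (by norm_num) (by norm_num) (by norm_num)
    norm_num at h1 h2
    linear_combination h1 + h2 + f1
  have e2 : f 5 * f 7 = f 8 + f 27 := by
    have h1 := s 2 3 (by norm_num) (by norm_num)
    have h2 := m 5 7 (by norm_num) (by norm_num) (by norm_num)
    norm_num at h1 h2
    linear_combination h1 + h2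
  have e3 : f 5 * f 13 = 1 + f 8 ^ 2 := by
    have h1 := s 1 4 (by norm_num) (by norm_num)
    have h2 := m 5 13 (by norm_num) (by norm_num) (by norm_num)
    norm_num at h1 h2
    linear_combination h1 + h2 + f1 + f64
  have e4 : f 7 * f 13 = f 27 + f 8 ^ 2 := by
    have h1 := s 3 4 (by norm_num) (by norm_num)
    have h2 := m 7 13 (by norm_num) (by norm_num) (by norm_num)
    norm_num at h1 h2
    linear_combination h1 + h2 + f64
  have e5 : 2 * f 7 * (1 + f 8) = 1 + f 125 := by
    have h1 := s 1 5 (by norm_num) (by norm_num)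
    have h2 := m 2 63 (by norm_num) (by norm_num) (by norm_num)
    have h3 := m 7 9 (by norm_num) (by norm_num) (by norm_num)
    norm_num at h1 h2 h3
    linear_combination h1 + h2 + f1 + 2 * h3 - f 63 * f2 - 2 * f 7 * f9
  have e6 : f 7 * f 19 = f 8 + f 125 := by
    have h1 := s 2 5 (by norm_num) (by norm_num)
    have h2 := m 7 19 (by norm_num) (by norm_num) (by norm_num)
    norm_num at h1 h2
    linear_combination h1 + h2
  have e7 : f 8 * f 19 = f 27 + f 125 := by
    have h1 := s 3 5 (by norm_num) (by norm_num)
    have h2 := m 8 19 (by norm_num) (by norm_num) (by norm_num)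
    norm_num at h1 h2
    linear_combination h1 + h2
  have e8 : f 27 * f 7 = f 8 ^ 2 + f 125 := by
    have h1 := s 4 5 (by norm_num) (by norm_num)
    have h2 := m 27 7 (by norm_num) (by norm_num) (by norm_num)
    norm_num at h1 h2
    linear_combination h1 + h2 + f64
  have e9 : f 27 * f 19 = 1 + f 8 ^ 3 := by
    have h1 := s 1 8 (by norm_num) (by norm_num)
    have h2 := m 27 19 (by norm_num) (by norm_num) (by norm_num)
    norm_num at h1 h2
    linear_combination h1 + h2 + f1 + f512
  have e10 : f 8 * f 43 = 1 + f 343 := by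
    have h1 := s 1 7 (by norm_num) (by norm_num)
    have h2 := m 8 43 (by norm_num) (by norm_num) (by norm_num)
    norm_num at h1 h2
    linear_combination h1 + h2 + f1
  have e11 : f 13 * f 43 = f 8 * f 27 + f 343 := by
    have h1 := s 6 7 (by norm_num) (by norm_num)
    have h2 := m 13 43 (by norm_num) (by norm_num) (by norm_num)
    norm_num at h1 h2
    linear_combination h1 + h2 + f216
  have e12 : (1 + f 8) * f 5 * f 19 = f 343 + f 8 ^ 3 := by
    have h1 := s 7 8 (by norm_num) (by norm_num)
    have h2 := m 9 95 (by norm_num) (by norm_num) (by norm_num)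
    have h3 := m 5 19 (by norm_num) (by norm_num) (by norm_num)
    norm_num at h1 h2 h3
    linear_combination h1 + h2 + f512 + f 9 * h3 - f 5 * f 19 * f9
  have e13 : f 27 * f 13 = f 8 + f 343 := by
    have h1 := s 2 7 (by norm_num) (by norm_num)
    have h2 := m 27 13 (by norm_num) (by norm_num) (by norm_num)
    norm_num at h1 h2
    linear_combination h1 + h2
  obtain ⟨hx, hy, hw, hu⟩ := base_alg e1 e2 e3 e4 e5 e6 e7 e8 e9 e10 e11 e12 e13
  exact ⟨hx, hy, by rw [f64, hx]; norm_num, hw, hu⟩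

/-! ### All cubes, and all values -/

theorem cubes (H : CubeAdditive f) (n : ℕ) (hn : 0 < n) : f (n ^ 3) = n ^ 3 := by
  obtain ⟨h2, h3, h4, h5, f4⟩ := H.base_values
  induction n using Nat.strong_induction_on with
  | _ n ih =>
  have hval := H.values_below (n := n) H.two f4 fun j hj hjn => ih j hjn hj
  by_cases hsmall : n < 6
  · interval_cases n <;> norm_num [H.one, h2, h3, h4, h5]
  by_cases hd : 3 ∣ n
  · obtain ⟨k, u, hu, hk⟩ := Nat.exists_eq_pow_mul_and_not_dvd hn.ne' 3 (by norm_num)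
    have hk0 : k ≠ 0 := by
      rintro rfl
      rw [hk] at hd
      simp at hd
      exact hu hd
    have hpos : 0 < u := Nat.pos_of_ne_zero (by rintro rfl; simp at hu)
    have h3k : 1 < 3 ^ k := Nat.one_lt_pow hk0 (by norm_num)
    have hcop : Nat.Coprime (3 ^ k) u :=
      Nat.Coprime.pow_left k ((Nat.Prime.coprime_iff_not_dvd Nat.prime_three).mpr hu)
    by_cases hu1 : u = 1
    · -- A power of `3` that is at least `9`: split off `4`, which is prime to it.
      have h4n : Nat.Coprime 4 n := by
        rw [hk, hu1, mul_one]
        exact Nat.Coprime.pow_right k (by norm_num)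
      have hc4 : Nat.Coprime 4 (n - 4) := (Nat.coprime_sub_self_right (by omega)).mpr h4n
      have hn6 : n ≠ 6 := by
        intro h
        rw [h] at h4n
        norm_num at h4n
      have e1 := hval (2 * 4 + (n - 4)) (by omega) (by omega) (by omega)
      have e2 := hval (4 + 2 * (n - 4)) (by omega) (by omega) (by omega)
      have := H.cube_step (b := 4) (c := n - 4) (by omega) (by omega) (by omega) hc4 (by omega)
        (ih 4 (by omega) (by omega)) (ih (n - 4) (by omega) (by omega))
        (by exact_mod_cast e1) (by exact_mod_cast e2)
      have hsum : 4 + (n - 4) = n := by omega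
      rw [hsum] at this
      rw [this]
      norm_cast
      rw [hsum]
    · have i1 := ih (3 ^ k)
        (by rw [hk]; exact lt_mul_of_one_lt_right (by omega) (show 1 < u by omega)) (by omega)
      have i2 := ih u (by rw [hk]; exact lt_mul_of_one_lt_left hpos h3k) hpos
      rw [hk, mul_pow, H.mul _ _ (by positivity) (by positivity)
        (Nat.Coprime.pow_left 3 (Nat.Coprime.pow_right 3 hcop)), i1, i2]
      push_cast
      ring
  · have hc3 : Nat.Coprime 3 (n - 3) :=
      (Nat.Prime.coprime_iff_not_dvd Nat.prime_three).mpr (by omega)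
    have e1 := hval (2 * 3 + (n - 3)) (by omega) (by omega) (by omega)
    have e2 := hval (3 + 2 * (n - 3)) (by omega) (by omega) (by omega)
    have := H.cube_step (b := 3) (c := n - 3) (by omega) (by omega) (by omega) hc3 (by omega)
      (ih 3 (by omega) (by omega)) (ih (n - 3) (by omega) (by omega))
      (by exact_mod_cast e1) (by exact_mod_cast e2)
    have hsum : 3 + (n - 3) = n := by omega
    rw [hsum] at this
    rw [this]
    norm_cast
    rw [hsum]

theorem not_three_dvd (H : CubeAdditive f) (n : ℕ) (hn : 0 < n) (h3 : ¬ 3 ∣ n) : f n = n :=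
  H.values_below (n := n + 3) H.two H.base_values.2.2.2.2 (fun j hj _ => H.cubes j hj) n hn h3
    (by omega)

/-- With `j = 3 ^ k`, `1³ + (3j - 1)³ = 9j (3j² - 3j + 1)`, whose last factor is prime to `3`. -/
theorem three_pow (H : CubeAdditive f) (k : ℕ) : f (3 ^ (k + 2)) = 3 ^ (k + 2) := by
  obtain ⟨i, hi⟩ : ∃ i, 3 ^ k = i + 1 :=
    Nat.exists_eq_succ_of_ne_zero (by positivity)
  -- `3j² - 3j + 1` in terms of `i = j - 1`.
  set q := 3 * (i * (i + 1)) + 1 with hq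
  have hq3 : ¬ 3 ∣ q := by omega
  have hcop : Nat.Coprime (3 ^ (k + 2)) q :=
    Nat.Coprime.pow_left _ ((Nat.Prime.coprime_iff_not_dvd Nat.prime_three).mpr hq3)
  have hfq := H.not_three_dvd q (by omega) hq3
  have h1 := H.add 1 (3 * i + 2) one_pos (by omega)
  have hsum : 1 ^ 3 + (3 * i + 2) ^ 3 = 3 ^ (k + 2) * q := by
    rw [pow_add, hi, hq]
    ring
  rw [hsum, H.mul _ _ (by positivity) (by omega) hcop, H.cubes 1 one_pos,
    H.cubes _ (by omega), hfq] at h1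
  have hq0 : (q : ℂ) ≠ 0 := by exact_mod_cast (by omega : q ≠ 0)
  apply mul_right_cancel₀ hq0
  rw [h1]
  exact_mod_cast hsum

end CubeAdditive

theorem cubes_two_additive (f : ℕ → ℂ)
    (hf1 : f 1 = 1)
    (hmul : ∀ m n : ℕ, 0 < m → 0 < n → Nat.Coprime m n → f (m * n) = f m * f n)
    (hadd : ∀ a b : ℕ, 0 < a → 0 < b →
      f (a ^ 3 + b ^ 3) = f (a ^ 3) + f (b ^ 3)) :
    ∀ n : ℕ, 0 < n → ¬(3 ∣ n ∧ ¬ 9 ∣ n) → f n = n := by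
  intro n hn h
  have H : CubeAdditive f := ⟨hf1, hmul, hadd⟩
  obtain ⟨k, u, hu, hk⟩ := Nat.exists_eq_pow_mul_and_not_dvd hn.ne' 3 (by norm_num)
  have hpos : 0 < u := Nat.pos_of_ne_zero (by rintro rfl; simp at hu)
  have hfu := H.not_three_dvd u hpos hu
  match k, hk with
  | 0, hk => rw [hk, pow_zero, one_mul, hfu]
  | 1, hk => omega
  | k + 2, hk =>
    rw [hk, hmul _ _ (by positivity) hpos
      (Nat.Coprime.pow_left _ ((Nat.Prime.coprime_iff_not_dvd Nat.prime_three).mpr hu)),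
      H.three_pow, hfu]
    push_cast
    ring
end

section
/- For every complex number c, there exists a multiplicative function f : ℕ → ℂ such that f(a³ + b³) = f(a³) + f(b³) for all positive integers a, b, with f(3) = c, and f(n) = n for every positive integer n such that it is not the case that 3 divides n and 9 does not divide n. In particular, the set of positive cubes is not a 2-additive uniqueness set for multiplicative functions. -/
/-!
Take `f n = c * (n / 3)` when 3 divides `n` exactly once, and `f n = n` otherwise. This is
multiplicative, since of two coprime factors at most one is divisible by 3. Cubes are `0, ±1`
modulo 9, so neither a cube nor a sum of two cubes is `3` or `6` modulo 9; hence `f` is the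
identity on all numbers occurring in the additive equation, and the value `f 3 = c` is free.
-/

theorem cube_mod_nine (a : ℕ) : a ^ 3 % 9 = 0 ∨ a ^ 3 % 9 = 1 ∨ a ^ 3 % 9 = 8 := by
  have h : a % 9 < 9 := Nat.mod_lt _ (by norm_num)
  rw [Nat.pow_mod]
  interval_cases a % 9 <;> simp

/-- The 3-adic valuation of `m * n` equals 1 exactly when that of `m` does, if `3 ∤ n`. -/
theorem three_exact_mul_iff {m n : ℕ} (hn : ¬ 3 ∣ n) :
    (3 ∣ m * n ∧ ¬ 9 ∣ m * n) ↔ (3 ∣ m ∧ ¬ 9 ∣ m) := by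
  have h3 : Nat.Coprime 3 n := (Nat.Prime.coprime_iff_not_dvd Nat.prime_three).2 hn
  have h9 : Nat.Coprime 9 n := Nat.Coprime.pow_left 2 h3
  rw [h3.dvd_mul_right, h9.dvd_mul_right]

theorem cubes_not_two_AU (c : ℂ) :
    ∃ f : ℕ → ℂ,
      f 1 = 1 ∧
      (∀ m n : ℕ, 0 < m → 0 < n → Nat.Coprime m n → f (m * n) = f m * f n) ∧
      (∀ a b : ℕ, 0 < a → 0 < b →
        f (a ^ 3 + b ^ 3) = f (a ^ 3) + f (b ^ 3)) ∧
      f 3 = c ∧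
      (∀ n : ℕ, 0 < n → ¬(3 ∣ n ∧ ¬ 9 ∣ n) → f n = n) := by
  refine ⟨fun n => if 3 ∣ n ∧ ¬ 9 ∣ n then c * ((n : ℂ) / 3) else n, ?_, ?_, ?_, ?_, ?_⟩
  · simp
  · have key : ∀ m n : ℕ, ¬ 3 ∣ n →
        (if 3 ∣ m * n ∧ ¬ 9 ∣ m * n then c * (((m * n : ℕ) : ℂ) / 3) else ((m * n : ℕ) : ℂ)) =
        (if 3 ∣ m ∧ ¬ 9 ∣ m then c * ((m : ℂ) / 3) else (m : ℂ)) *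
        (if 3 ∣ n ∧ ¬ 9 ∣ n then c * ((n : ℂ) / 3) else (n : ℂ)) := by
      intro m n hn
      rw [if_neg (fun h : 3 ∣ n ∧ ¬ 9 ∣ n => hn h.1)]
      simp only [three_exact_mul_iff hn]
      split_ifs <;> push_cast <;> ring
    intro m n _ _ hmn
    by_cases hn : 3 ∣ n
    · have hm : ¬ 3 ∣ m := fun hm => by
        have := Nat.dvd_gcd hm hn
        rw [hmn.gcd_eq_one] at this
        omega
      have h := key n m hm
      rw [mul_comm n m] at h
      exact h.trans (mul_comm _ _)
    · exact key m n hn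
  · intro a b _ _
    have ha := cube_mod_nine a
    have hb := cube_mod_nine b
    beta_reduce
    rw [if_neg (by omega), if_neg (by omega), if_neg (by omega)]
    push_cast
    rfl
  · norm_num
  · intro n _ hn
    exact if_neg hn
end

section
/- If f : ℕ → ℂ is a multiplicative function satisfying f(a³ + b³) = f(a³) + f(b³) for all positive integers a, b, then f(n) = n for each n in the set {1, 2, 4, 8, 9, 27, 5, 125, 7, 343, 13, 19}. -/
/-!
Write `x = f 8`, `y = f 27`, `z = f 125`, `t = f 343`, `A = f 4`, `w = f 5`, `s = f 7`, `u = f 13`,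
`v = f 19`, `p = f 43`. Evaluating `f` at suitable sums of two cubes in two ways (additivity on
cubes against the factorization of the sum) gives a polynomial system in these values. It includes
`f 64 = x ^ 2`, `f 512 = x ^ 3`, `f 729 = y ^ 2`, and, from `1729 = 1 + 12 ^ 3 = 9 ^ 3 + 10 ^ 3`,
the relation `1 + x ^ 2 * y = y ^ 2 + x * z`.

`cube_system_solution` solves the system by elimination. Ruling out `x = 0` gives
`v ^ 2 = 1 + x ^ 2 + x ^ 3 - x * y`, hence `y ^ 2 = x * y + 1 + x ^ 3`. Ruling out `y = 0` gives
`v = y - x` and then `s = x - 1`, hence `(x - 1) * y = 3 * (x - 1) * (x + 1)`. Ruling out `x = 1`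
gives `y = 3 * (x + 1)`, and so `x = 8`.
-/

/-- The polynomial system satisfied by the values of `f` forces `f 8 = 8`, `f 27 = 27`, `f 7 = 7`.
The names of the variables are those of the module comment. -/
lemma cube_system_solution {x y z t A w s u v p : ℂ}
    (e28 : A * s = 1 + y) (e35 : w * s = x + y) (e65 : w * u = 1 + x ^ 2)
    (e91 : s * u = y + x ^ 2) (e126 : 2 * (1 + x) * s = 1 + z) (e133 : s * v = x + z)
    (e152 : x * v = y + z) (e189 : y * s = x ^ 2 + z) (e344 : x * p = 1 + t)
    (e351 : y * u = x + t) (e513 : y * v = 1 + x ^ 3) (e559 : u * p = x * y + t)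
    (e855 : (1 + x) * w * v = t + x ^ 3) (e1729 : 1 + x ^ 2 * y = y ^ 2 + x * z) :
    x = 8 ∧ y = 27 ∧ s = 7 := by
  have hx : x ≠ 0 := by
    rintro rfl
    have hy : y ≠ 0 := by
      rintro rfl
      norm_num at e513
    have hs : s = -1 := mul_left_cancel₀ hy (by linear_combination e189 - e152)
    subst hs
    have hz : z = -3 := by linear_combination -e126
    have hy3 : y = 3 := by linear_combination -e152 - hz
    subst hz hy3
    have : (8 : ℂ) = 0 := by linear_combination 3 * e133 + e513
    norm_num at this
  have hz : z = x * v - y := by linear_combination -e152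
  have hv2 : v ^ 2 = 1 + x ^ 2 + x ^ 3 - x * y := by
    refine mul_left_cancel₀ hx ?_
    subst hz
    linear_combination y * e133 - v * e189 + (x + 1) * e513 + e1729
  have hy2 : y ^ 2 = x * y + 1 + x ^ 3 := by
    subst hz
    linear_combination -y ^ 2 * hv2 + (y * v + 1) * e513 - x * y * e1729
  have hy : y ≠ 0 := by
    rintro rfl
    have hv : v = -x := mul_left_cancel₀ hx (by linear_combination e152 - e189)
    subst hv
    have hs : s = x - 1 := mul_left_cancel₀ hx (by linear_combination -e133 + e189)
    subst hs
    have hxx : x ^ 2 = 1 := by linear_combination (e126 - e189) / 3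
    have hx1 : x = -1 := by linear_combination -x * hxx - hy2
    subst hx1
    have : (9 : ℂ) = 0 := by linear_combination -4 * e65 - 2 * u * e35 - e91
    norm_num at this
  have hv : v = y - x := mul_left_cancel₀ hy (by linear_combination e513 - hy2)
  subst hv
  have hs : s = x - 1 := by
    by_cases h : y - x = 0
    · obtain rfl : y = x := sub_eq_zero.mp h
      exact mul_left_cancel₀ hx (by linear_combination e189 - e152)
    · exact mul_left_cancel₀ h (by linear_combination e133 - e152)
  subst hs
  have hx1 : x - 1 ≠ 0 := by
    intro h
    obtain rfl : x = 1 := sub_eq_zero.mp h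
    obtain rfl : y = -1 := by linear_combination -e28
    have hu : u = 4 * w := by linear_combination e855 - e351
    have hp : p = -u := by linear_combination e344 - e351
    have huu : u ^ 2 = 8 := by linear_combination u * hu + 4 * e65
    have hu6 : u = 6 := by
      subst hp
      linear_combination e559 + huu - e351
    rw [hu6] at huu
    norm_num at huu
  have hy3 : y = 3 * (x + 1) := mul_left_cancel₀ hx1 (by linear_combination e152 - e126)
  have hxp : x + 1 ≠ 0 := fun h => hy (by rw [hy3, h, mul_zero])
  have hx8 : x = 8 := by
    have h1 : (x + 1) * (x - 8) = (x + 1) * 0 := by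
      refine mul_left_cancel₀ hxp ?_
      subst hy3
      linear_combination -hy2
    exact sub_eq_zero.mp (mul_left_cancel₀ hxp h1)
  subst hx8
  refine ⟨rfl, ?_, ?_⟩
  · linear_combination hy3
  · norm_num

theorem cubes_two_small_values (f : ℕ → ℂ)
    (hf1 : f 1 = 1)
    (hmul : ∀ m n : ℕ, 0 < m → 0 < n → Nat.Coprime m n → f (m * n) = f m * f n)
    (hadd : ∀ a b : ℕ, 0 < a → 0 < b →
      f (a ^ 3 + b ^ 3) = f (a ^ 3) + f (b ^ 3)) :
    ∀ n ∈ ({1, 2, 4, 8, 9, 27, 5, 125, 7, 343, 13, 19} : Finset ℕ), f n = n := by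
  have M : ∀ m n : ℕ, 0 < m → 0 < n → Nat.gcd m n = 1 → f (m * n) = f m * f n := hmul
  have h2 : f 2 = 2 := by
    have := hadd 1 1 (by norm_num) (by norm_num)
    norm_num [hf1] at this
    exact this
  have h9 : f 9 = 1 + f 8 := by
    have := hadd 1 2 (by norm_num) (by norm_num)
    norm_num [hf1] at this
    exact this
  -- Values at larger cubes reduce to `f 8`, `f 27`, `f 125`.
  have h64 : f 64 = f 8 ^ 2 := by
    have h := hadd 2 4 (by norm_num) (by norm_num)
    have m := M 8 9 (by norm_num) (by norm_num) (by norm_num)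
    norm_num at h m
    linear_combination m - h + f 8 * h9
  have h216 : f 216 = f 8 * f 27 := M 8 27 (by norm_num) (by norm_num) (by norm_num)
  have h1000 : f 1000 = f 8 * f 125 := M 8 125 (by norm_num) (by norm_num) (by norm_num)
  have h1728 : f 1728 = f 8 ^ 2 * f 27 := by
    have m := M 64 27 (by norm_num) (by norm_num) (by norm_num)
    rwa [h64] at m
  have e28 : f 4 * f 7 = 1 + f 27 := by
    have h := hadd 1 3 (by norm_num) (by norm_num)
    have m := M 4 7 (by norm_num) (by norm_num) (by norm_num)
    norm_num [hf1] at h m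
    linear_combination h - m
  have e35 : f 5 * f 7 = f 8 + f 27 := by
    have h := hadd 2 3 (by norm_num) (by norm_num)
    have m := M 5 7 (by norm_num) (by norm_num) (by norm_num)
    norm_num at h m
    linear_combination h - m
  have e65 : f 5 * f 13 = 1 + f 8 ^ 2 := by
    have h := hadd 1 4 (by norm_num) (by norm_num)
    have m := M 5 13 (by norm_num) (by norm_num) (by norm_num)
    norm_num [hf1] at h m
    linear_combination h - m + h64
  have e91 : f 7 * f 13 = f 27 + f 8 ^ 2 := by
    have h := hadd 3 4 (by norm_num) (by norm_num)
    have m := M 7 13 (by norm_num) (by norm_num) (by norm_num)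
    norm_num at h m
    linear_combination h - m + h64
  have e126 : 2 * (1 + f 8) * f 7 = 1 + f 125 := by
    have h := hadd 1 5 (by norm_num) (by norm_num)
    have m := M 18 7 (by norm_num) (by norm_num) (by norm_num)
    have m' := M 2 9 (by norm_num) (by norm_num) (by norm_num)
    norm_num [hf1] at h m m'
    rw [m', h2, h9] at m
    linear_combination h - m
  have e133 : f 7 * f 19 = f 8 + f 125 := by
    have h := hadd 2 5 (by norm_num) (by norm_num)
    have m := M 7 19 (by norm_num) (by norm_num) (by norm_num)
    norm_num at h m
    linear_combination h - m
  have e152 : f 8 * f 19 = f 27 + f 125 := by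
    have h := hadd 3 5 (by norm_num) (by norm_num)
    have m := M 8 19 (by norm_num) (by norm_num) (by norm_num)
    norm_num at h m
    linear_combination h - m
  have e189 : f 27 * f 7 = f 8 ^ 2 + f 125 := by
    have h := hadd 4 5 (by norm_num) (by norm_num)
    have m := M 27 7 (by norm_num) (by norm_num) (by norm_num)
    norm_num at h m
    linear_combination h - m + h64
  have e344 : f 8 * f 43 = 1 + f 343 := by
    have h := hadd 1 7 (by norm_num) (by norm_num)
    have m := M 8 43 (by norm_num) (by norm_num) (by norm_num)
    norm_num [hf1] at h m
    linear_combination h - m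
  have e351 : f 27 * f 13 = f 8 + f 343 := by
    have h := hadd 2 7 (by norm_num) (by norm_num)
    have m := M 27 13 (by norm_num) (by norm_num) (by norm_num)
    norm_num at h m
    linear_combination h - m
  have e559 : f 13 * f 43 = f 8 * f 27 + f 343 := by
    have h := hadd 6 7 (by norm_num) (by norm_num)
    have m := M 13 43 (by norm_num) (by norm_num) (by norm_num)
    norm_num at h m
    linear_combination h - m + h216
  have h512 : f 512 = f 8 ^ 3 := by
    have h := hadd 2 8 (by norm_num) (by norm_num)
    have m := M 8 65 (by norm_num) (by norm_num) (by norm_num)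
    have m' := M 5 13 (by norm_num) (by norm_num) (by norm_num)
    norm_num at h m m'
    linear_combination m - h + f 8 * m' + f 8 * e65
  have e513 : f 27 * f 19 = 1 + f 8 ^ 3 := by
    have h := hadd 1 8 (by norm_num) (by norm_num)
    have m := M 27 19 (by norm_num) (by norm_num) (by norm_num)
    norm_num [hf1] at h m
    linear_combination h - m + h512
  have e855 : (1 + f 8) * f 5 * f 19 = f 343 + f 8 ^ 3 := by
    have h := hadd 7 8 (by norm_num) (by norm_num)
    have m := M 45 19 (by norm_num) (by norm_num) (by norm_num)
    have m' := M 9 5 (by norm_num) (by norm_num) (by norm_num)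
    norm_num at h m m'
    rw [m', h9] at m
    linear_combination h - m + h512
  have h729 : f 729 = f 27 ^ 2 := by
    have h := hadd 3 9 (by norm_num) (by norm_num)
    have m := M 28 27 (by norm_num) (by norm_num) (by norm_num)
    have m' := M 4 7 (by norm_num) (by norm_num) (by norm_num)
    norm_num at h m m'
    linear_combination m - h + f 27 * m' + f 27 * e28
  have e1729 : 1 + f 8 ^ 2 * f 27 = f 27 ^ 2 + f 8 * f 125 := by
    have h := hadd 1 12 (by norm_num) (by norm_num)
    have h' := hadd 9 10 (by norm_num) (by norm_num)
    norm_num [hf1] at h h'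
    linear_combination h' - h + h729 + h1000 - h1728
  obtain ⟨hx, hy, hs⟩ := cube_system_solution e28 e35 e65 e91 e126 e133 e152 e189 e344 e351 e513
    e559 e855 e1729
  simp only [hx, hy, hs] at e28 e35 e91 e126 e133 e351
  have hA : f 4 = 4 := by linear_combination e28 / 7
  have hw : f 5 = 5 := by linear_combination e35 / 7
  have hu : f 13 = 13 := by linear_combination e91 / 7
  have hz : f 125 = 125 := by linear_combination -e126
  have hv : f 19 = 19 := by linear_combination (e133 + hz) / 7
  have ht : f 343 = 343 := by linear_combination -e351 + 27 * hu
  intro n hn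
  simp only [Finset.mem_insert, Finset.mem_singleton] at hn
  rcases hn with rfl | rfl | rfl | rfl | rfl | rfl | rfl | rfl | rfl | rfl | rfl | rfl <;>
    norm_num [hf1, h2, h9, hx, hy, hs, hA, hw, hu, hz, hv, ht]
end

section
/- If f : ℕ → ℂ is a multiplicative function satisfying f(a³ + b³) = f(a³) + f(b³) for all positive integers a, b, then f(2^r) = 2^r and f(7^r) = 7^r for all integers r ≥ 1, and f(3^r) = 3^r for all integers r ≥ 2. -/
/-!
Write `g a = f (a ^ 3)`. The proof has a finite part and an inductive part.

*Finite part.* With `x, s, t, y, z` the values of `f` at `8, 7, 27, 125, 19`, the relations coming from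
small pairs `(a, b)` give polynomial equations whose only solutions are `(x, s, t) = (8, 7, 27)` and
the spurious `(1, 0, -1)` (modelled on the quadratic character modulo 7). The latter is excluded by
a few further pairs, and then the values of `f` at `4, 49, 343, 81` follow (`small_values`).

*Inductive part.* Let `p` be prime, and let `a, b` be prime to `p` with `p ^ k` exactly
dividing `a ^ 3 + b ^ 3`. Comparing the relations for `(a, b)` and `(p a, p b)` gives
`f (p ^ (k + 3)) = f (p ^ 3) * f (p ^ k)`, provided that `g a + g b ≠ 0`. If `g a + g b = 0` for all such
pairs, then `g` is periodic modulo `p ^ (k + 1)` on integers prime to `p`, hence completely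
multiplicative along powers of any `q` prime to `p`, so `g q` is a root of unity; this is
false as soon as `‖g q‖ > 1` (`recurrence`). The case `q = 3` serves `p = 2`, and `q = 2` serves
`p = 3` and `p = 7`.
-/

/-- If `p ^ k` exactly divides `1 + c ^ 3` and some `q` prime to `p` has `1 < ‖f (q ^ 3)‖`, then passing
from `p ^ k` to `p ^ (k + 3)` multiplies `f` by `f (p ^ 3)`. -/
lemma recurrence (f : ℕ → ℂ)
    (hf1 : f 1 = 1)
    (hmul : ∀ m n : ℕ, 0 < m → 0 < n → Nat.Coprime m n → f (m * n) = f m * f n)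
    (hadd : ∀ a b : ℕ, 0 < a → 0 < b →
      f (a ^ 3 + b ^ 3) = f (a ^ 3) + f (b ^ 3))
    {p k q c u : ℕ} (hp : p.Prime) (hc0 : 0 < c) (hc : 1 + c ^ 3 = p ^ k * u) (hu : ¬ p ∣ u)
    (hcp : Nat.Coprime c p) (hqp : Nat.Coprime q p) (hq0 : 0 < q) (hq : 1 < ‖f (q ^ 3)‖) :
    f (p ^ (k + 3)) = f (p ^ 3) * f (p ^ k) := by
  by_contra hne
  have hpp : 0 < p := hp.pos
  have H : ∀ a b m : ℕ, 0 < a → 0 < b → Nat.Coprime a p → Nat.Coprime b p →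
      a ^ 3 + b ^ 3 = p ^ k * m → ¬ p ∣ m → f (a ^ 3) + f (b ^ 3) = 0 := by
    intro a b m ha hb hap hbp hm hpm
    have hm0 : 0 < m := Nat.pos_of_ne_zero (by rintro rfl; simp at hpm)
    have hcop : ∀ j : ℕ, Nat.Coprime (p ^ j) m :=
      fun j => Nat.Coprime.pow_left _ ((Nat.Prime.coprime_iff_not_dvd hp).2 hpm)
    have h1 : f (p ^ k) * f m = f (a ^ 3) + f (b ^ 3) := by
      rw [← hmul _ _ (by positivity) hm0 (hcop k), ← hm, hadd a b ha hb]
    have h2 : f (p ^ (k + 3)) * f m = f (p ^ 3) * (f (a ^ 3) + f (b ^ 3)) := by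
      rw [← hmul _ _ (by positivity) hm0 (hcop _)]
      have e : p ^ (k + 3) * m = (p * a) ^ 3 + (p * b) ^ 3 := by
        rw [mul_pow, mul_pow, ← mul_add, hm]; ring
      rw [e, hadd _ _ (by positivity) (by positivity), mul_pow, mul_pow,
        hmul _ _ (by positivity) (by positivity) (Nat.Coprime.pow 3 3 hap.symm),
        hmul _ _ (by positivity) (by positivity) (Nat.Coprime.pow 3 3 hbp.symm), mul_add]
    have h3 : (f (p ^ (k + 3)) - f (p ^ 3) * f (p ^ k)) * f m = 0 := by
      rw [← h1] at h2
      linear_combination h2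
    rcases mul_eq_zero.1 h3 with h | h
    · exact absurd (sub_eq_zero.1 h) hne
    · rw [← h1, h, mul_zero]
  have per : ∀ a a' : ℕ, 0 < a → 0 < a' → Nat.Coprime a p → Nat.Coprime a' p →
      a ≡ a' [MOD p ^ (k + 1)] → f (a ^ 3) = f (a' ^ 3) := by
    intro a a' ha ha' hap hap' hmod
    -- both `a` and `a'` pair with `a * c`
    have e1 : a ^ 3 + (a * c) ^ 3 = p ^ k * (u * a ^ 3) := by
      rw [mul_pow]
      linear_combination a ^ 3 * hc
    have hpa : ¬ p ∣ u * a ^ 3 := by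
      intro h
      rcases (Nat.Prime.dvd_mul hp).1 h with h | h
      · exact hu h
      · exact (Nat.Prime.coprime_iff_not_dvd hp).1 hap.symm (hp.dvd_of_dvd_pow h)
    have hmod' : a ^ 3 + (a * c) ^ 3 ≡ a' ^ 3 + (a * c) ^ 3 [MOD p ^ (k + 1)] :=
      (hmod.pow 3).add_right _
    have hdvd : p ^ k ∣ a' ^ 3 + (a * c) ^ 3 :=
      (hmod'.dvd_iff (pow_dvd_pow p (Nat.le_succ k))).1 ⟨_, e1⟩
    obtain ⟨m, hm⟩ := hdvd
    have hmm : u * a ^ 3 ≡ m [MOD p] := by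
      rw [e1, hm, pow_succ] at hmod'
      exact Nat.ModEq.mul_left_cancel' (by positivity) hmod'
    have hpm : ¬ p ∣ m := fun h => hpa ((hmm.dvd_iff dvd_rfl).2 h)
    have hacp : Nat.Coprime (a * c) p := Nat.Coprime.mul_left hap hcp
    have k1 := H a (a * c) _ ha (by positivity) hap hacp e1 hpa
    have k2 := H a' (a * c) _ ha' (by positivity) hap' hacp hm hpm
    linear_combination k1 - k2
  have pw : ∀ n : ℕ, f ((q ^ n) ^ 3) = f (q ^ 3) ^ n := by
    intro n
    induction n with
    | zero => simpa using hf1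
    | succ n ih =>
      -- replace the last factor `q` by a congruent `y` prime to `q ^ n`
      obtain ⟨y, hy1, hy2⟩ := Nat.chineseRemainder
        (Nat.Coprime.pow (k + 1) n hqp.symm) q 1
      have hyp : Nat.Coprime y p := by
        have h : y ≡ q [MOD p] := hy1.of_dvd (dvd_pow_self p (Nat.succ_ne_zero k))
        rw [Nat.Coprime, h.gcd_eq]
        exact hqp
      have hyq : Nat.Coprime y (q ^ n) := by
        rw [Nat.Coprime, hy2.gcd_eq]
        simp
      have hy0 : 0 < y := by
        rcases Nat.eq_zero_or_pos y with h | h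
        · rw [h, Nat.coprime_zero_left] at hyp
          exact absurd hyp hp.one_lt.ne'
        · exact h
      have hqn : Nat.Coprime (q ^ n) p := Nat.Coprime.pow_left n hqp
      have e : f ((q ^ (n + 1)) ^ 3) = f ((q ^ n * y) ^ 3) := by
        refine per _ _ (by positivity) (by positivity) (Nat.Coprime.pow_left _ hqp)
          (Nat.Coprime.mul_left hqn hyp) ?_
        rw [pow_succ]
        exact (hy1.symm).mul_left _
      rw [e, mul_pow, hmul _ _ (by positivity) (by positivity) (Nat.Coprime.pow 3 3 hyq.symm), ih,
        per y q hy0 hq0 hyp hqp hy1, pow_succ (f (q ^ 3)) n]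
  have hroot : f (q ^ 3) ^ (p ^ (k + 1)).totient = 1 := by
    rw [← pw, per (q ^ (p ^ (k + 1)).totient) 1 (by positivity) one_pos
      (Nat.Coprime.pow_left _ hqp) (Nat.coprime_one_left p)
      (Nat.ModEq.pow_totient (Nat.Coprime.pow_right _ hqp))]
    simpa using hf1
  have hlt : 1 < ‖f (q ^ 3)‖ ^ (p ^ (k + 1)).totient :=
    one_lt_pow₀ hq (Nat.totient_pos.2 (by positivity)).ne'
  rw [← norm_pow, hroot, norm_one] at hlt
  exact lt_irrefl _ hlt

/-- The polynomial system satisfied by the values `x, s, t, y, z` of `f` at `8, 7, 27, 125, 19`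
forces `x = 8` and `s = 7` once `s ≠ 0`. -/
lemma solve_system (x s t y z : ℂ) (hs : s ≠ 0)
    (h1 : 2 * (1 + x) * s = 1 + y) (h2 : t * s = y + x ^ 2) (h3 : s * z = y + x)
    (h4 : x * z = y + t) (h5 : t * z = x ^ 3 + 1)
    (h6 : s ^ 2 * (x ^ 2 + 1) = (t + x) * (x ^ 2 + t)) :
    x = 8 ∧ s = 7 := by
  have a1 : s * (z - 2 - 2 * x) = x - 1 := by linear_combination h3 - h1
  have a2 : t = (1 + x) * (z - 2 * x) := by
    apply mul_left_cancel₀ hs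
    linear_combination h2 - h3 - x * a1
  have a3 : z = 2 * (x + 1) * (x - s) + 1 := by
    linear_combination h1 - h4 - a2
  have a4 : (x - s - 1) * (2 * (x + 1) * s - 1) = 0 := by
    linear_combination a1 - s * a3
  have a5 : (1 + x) * (z ^ 2 - 2 * x * z - (x ^ 2 - x + 1)) = 0 := by
    linear_combination h5 - z * a2
  have hx : 1 + x ≠ 0 := by
    intro h
    have hx : x = -1 := by linear_combination h
    subst hx
    have : z = 1 := by linear_combination a3
    subst this
    have : s = -2 := by linear_combination a1
    grind
  have a6 := (mul_eq_zero.1 a5).resolve_left hx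
  rcases mul_eq_zero.1 a4 with h | h
  · have hz : z = 2 * x + 3 := by linear_combination a3 + 2 * (x + 1) * h
    have : (1 + x) * (x - 8) = 0 := by
      rw [hz] at a6
      linear_combination -a6
    have hx8 := (mul_eq_zero.1 this).resolve_left hx
    exact ⟨by linear_combination hx8, by linear_combination hx8 - h⟩
  · exfalso
    have hz : z = 2 * x * (x + 1) := by linear_combination a3 - h
    have ht : t = 2 * x ^ 2 * (1 + x) := by linear_combination a2 + (1 + x) * hz
    have b1 : 4 * x ^ 4 + 4 * x ^ 3 - x ^ 2 + x - 1 = 0 := by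
      rw [hz] at a6
      linear_combination a6
    have b2 : x ^ 2 + 1 = 4 * (x + 1) ^ 2 * ((t + x) * (x ^ 2 + t)) := by
      rw [← h6]
      linear_combination (-(2 * (x + 1) * s + 1) * (x ^ 2 + 1)) * h
    rw [ht] at b2
    clear h1 h2 h3 h4 h5 h6 a1 a2 a3 a4 a5 a6 hz ht h
    grind

lemma small_values (f : ℕ → ℂ)
    (hf1 : f 1 = 1)
    (hmul : ∀ m n : ℕ, 0 < m → 0 < n → Nat.Coprime m n → f (m * n) = f m * f n)
    (hadd : ∀ a b : ℕ, 0 < a → 0 < b →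
      f (a ^ 3 + b ^ 3) = f (a ^ 3) + f (b ^ 3)) :
    f 2 = 2 ∧ f 4 = 4 ∧ f 8 = 8 ∧ f 7 = 7 ∧ f 49 = 49 ∧ f 343 = 343 ∧
      f 9 = 9 ∧ f 27 = 27 ∧ f 81 = 81 := by
  have M : ∀ m n k : ℕ, 0 < m → 0 < n → Nat.Coprime m n → m * n = k → f k = f m * f n := by
    rintro m n k hm hn h rfl
    exact hmul m n hm hn h
  have A : ∀ a b a3 b3 k : ℕ, 0 < a → 0 < b → a ^ 3 = a3 → b ^ 3 = b3 → a3 + b3 = k →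
      f k = f a3 + f b3 := by
    rintro a b _ _ _ ha hb rfl rfl rfl
    exact hadd a b ha hb
  have f2 : f 2 = 2 := by
    rw [A 1 1 1 1 2 (by norm_num) (by norm_num) rfl rfl rfl, hf1]; norm_num
  have f9 : f 9 = 1 + f 8 := by
    rw [A 1 2 1 8 9 (by norm_num) (by norm_num) rfl rfl rfl, hf1]
  have f64 : f 64 = f 8 ^ 2 := by
    have h := A 4 2 64 8 72 (by norm_num) (by norm_num) rfl rfl rfl
    rw [M 8 9 72 (by norm_num) (by norm_num) (by norm_num) rfl, f9] at h
    linear_combination -h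
  have f512 : f 512 = f 8 ^ 3 := by
    have h := A 8 4 512 64 576 (by norm_num) (by norm_num) rfl rfl rfl
    rw [M 64 9 576 (by norm_num) (by norm_num) (by norm_num) rfl, f9, f64] at h
    linear_combination -h
  have e1 : 2 * (1 + f 8) * f 7 = 1 + f 125 := by
    have h := A 1 5 1 125 126 (by norm_num) (by norm_num) rfl rfl rfl
    rwa [M 18 7 126 (by norm_num) (by norm_num) (by norm_num) rfl,
      M 2 9 18 (by norm_num) (by norm_num) (by norm_num) rfl, f9, f2, hf1] at h
  have e2 : f 27 * f 7 = f 125 + f 8 ^ 2 := by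
    have h := A 5 4 125 64 189 (by norm_num) (by norm_num) rfl rfl rfl
    rwa [M 27 7 189 (by norm_num) (by norm_num) (by norm_num) rfl, f64] at h
  have e3 : f 7 * f 19 = f 125 + f 8 := by
    have h := A 5 2 125 8 133 (by norm_num) (by norm_num) rfl rfl rfl
    rwa [M 7 19 133 (by norm_num) (by norm_num) (by norm_num) rfl] at h
  have e4 : f 8 * f 19 = f 125 + f 27 := by
    have h := A 5 3 125 27 152 (by norm_num) (by norm_num) rfl rfl rfl
    rwa [M 8 19 152 (by norm_num) (by norm_num) (by norm_num) rfl] at h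
  have e5 : f 27 * f 19 = f 8 ^ 3 + 1 := by
    have h := A 8 1 512 1 513 (by norm_num) (by norm_num) rfl rfl rfl
    rwa [M 27 19 513 (by norm_num) (by norm_num) (by norm_num) rfl, f512, hf1] at h
  have e6 : f 4 * f 7 = 1 + f 27 := by
    have h := A 1 3 1 27 28 (by norm_num) (by norm_num) rfl rfl rfl
    rwa [M 4 7 28 (by norm_num) (by norm_num) (by norm_num) rfl, hf1] at h
  have e7 : f 5 * f 7 = f 27 + f 8 := by
    have h := A 3 2 27 8 35 (by norm_num) (by norm_num) rfl rfl rfl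
    rwa [M 5 7 35 (by norm_num) (by norm_num) (by norm_num) rfl] at h
  have e8 : f 5 * f 13 = f 8 ^ 2 + 1 := by
    have h := A 4 1 64 1 65 (by norm_num) (by norm_num) rfl rfl rfl
    rwa [M 5 13 65 (by norm_num) (by norm_num) (by norm_num) rfl, f64, hf1] at h
  have e9 : f 7 * f 13 = f 8 ^ 2 + f 27 := by
    have h := A 4 3 64 27 91 (by norm_num) (by norm_num) rfl rfl rfl
    rwa [M 7 13 91 (by norm_num) (by norm_num) (by norm_num) rfl, f64] at h
  have e10 : f 27 * f 13 = f 343 + f 8 := by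
    have h := A 7 2 343 8 351 (by norm_num) (by norm_num) rfl rfl rfl
    rwa [M 27 13 351 (by norm_num) (by norm_num) (by norm_num) rfl] at h
  have e6' : f 7 ^ 2 * (f 8 ^ 2 + 1) = (f 27 + f 8) * (f 8 ^ 2 + f 27) := by
    rw [← e7, ← e8, ← e9]; ring
  have hs : f 7 ≠ 0 := by
    intro h0
    have e11 : (1 + f 8) * f 5 * f 19 = f 8 ^ 3 + f 343 := by
      have h := A 8 7 512 343 855 (by norm_num) (by norm_num) rfl rfl rfl
      rwa [M 45 19 855 (by norm_num) (by norm_num) (by norm_num) rfl,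
        M 9 5 45 (by norm_num) (by norm_num) (by norm_num) rfl, f9, f512] at h
    have e12 : f 729 = - f 27 := by
      have h := A 9 3 729 27 756 (by norm_num) (by norm_num) rfl rfl rfl
      rw [M 108 7 756 (by norm_num) (by norm_num) (by norm_num) rfl, h0] at h
      linear_combination -h
    have e13 : f 13 * f 61 = f 729 + f 8 ^ 2 := by
      have h := A 9 4 729 64 793 (by norm_num) (by norm_num) rfl rfl rfl
      rwa [M 13 61 793 (by norm_num) (by norm_num) (by norm_num) rfl, f64] at h
    have e14 : (1 + f 8) * f 5 * f 61 = f 8 * f 343 + 1 := by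
      have h := A 14 1 2744 1 2745 (by norm_num) (by norm_num) rfl rfl rfl
      rwa [M 45 61 2745 (by norm_num) (by norm_num) (by norm_num) rfl,
        M 9 5 45 (by norm_num) (by norm_num) (by norm_num) rfl, f9,
        M 8 343 2744 (by norm_num) (by norm_num) (by norm_num) rfl, hf1] at h
    rw [h0] at e1 e2 e3 e6 e7
    have y1 : f 125 = -1 := by linear_combination -e1
    have x1 : f 8 = 1 := by linear_combination -e3 - y1
    have t1 : f 27 = -1 := by linear_combination -e6
    have z1 : f 19 = -2 := by
      rw [x1, y1, t1] at e4
      linear_combination e4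
    rw [x1, t1] at e10
    rw [x1, z1] at e11
    rw [x1] at e8
    rw [e12, x1, t1] at e13
    rw [x1] at e14
    -- for `v, w, G` the values at `5, 13, 343`, the relations now read
    -- `-w = G + 1`, `-4 v = 1 + G`, `v w = 2`, `w * f 61 = 2`, `2 v * f 61 = G + 1`
    have v0 : f 5 ≠ 0 := by
      intro h
      rw [h] at e8
      norm_num at e8
    have q1 : f 61 = -2 := by
      apply mul_left_cancel₀ v0
      linear_combination e14 / 2 - e11 / 2
    have w1 : f 13 = -1 := by
      rw [q1] at e13
      linear_combination -e13 / 2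
    have v1 : f 5 = -2 := by
      rw [w1] at e8
      linear_combination -e8
    rw [v1] at e11
    rw [w1] at e10
    have : (8 : ℂ) = 1 := by linear_combination e11 - e10
    norm_num at this
  obtain ⟨x1, s1⟩ := solve_system _ _ _ _ _ hs e1 e2 e3 e4 e5 e6'
  rw [x1, s1] at e1
  have y1 : f 125 = 125 := by linear_combination -e1
  rw [s1, y1, x1] at e2
  have t1 : f 27 = 27 := by linear_combination e2 / 7
  rw [s1, t1] at e6 e7
  have u1 : f 4 = 4 := by linear_combination e6 / 7
  have v1 : f 5 = 5 := by rw [x1] at e7; linear_combination e7 / 7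
  have w1 : f 13 = 13 := by rw [s1, x1, t1] at e9; linear_combination e9 / 7
  have G1 : f 343 = 343 := by rw [t1, w1, x1] at e10; linear_combination -e10
  have f49 : f 49 = 49 := by
    have h := A 5 8 125 512 637 (by norm_num) (by norm_num) rfl rfl rfl
    rw [M 13 49 637 (by norm_num) (by norm_num) (by norm_num) rfl, f512, y1, x1, w1] at h
    linear_combination h / 13
  have g19 : f 6859 = 6859 := by
    have h := A 19 1 6859 1 6860 (by norm_num) (by norm_num) rfl rfl rfl
    rw [M 20 343 6860 (by norm_num) (by norm_num) (by norm_num) rfl,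
      M 4 5 20 (by norm_num) (by norm_num) (by norm_num) rfl, u1, v1, G1, hf1] at h
    linear_combination -h
  have f81 : f 81 = 81 := by
    have h := A 19 8 6859 512 7371 (by norm_num) (by norm_num) rfl rfl rfl
    rw [M 81 91 7371 (by norm_num) (by norm_num) (by norm_num) rfl,
      M 7 13 91 (by norm_num) (by norm_num) (by norm_num) rfl, s1, w1, g19, f512, x1] at h
    linear_combination h / 91
  exact ⟨f2, u1, x1, s1, f49, G1, by rw [f9, x1]; norm_num, t1, f81⟩

/-- A witness for `recurrence` when `p ≠ 3`: `c = p ^ k - 1`. -/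
lemma exists_witness {p k : ℕ} (hp : p.Prime) (hp3 : p ≠ 3) (hk : 1 ≤ k) :
    ∃ c u : ℕ, 0 < c ∧ 1 + c ^ 3 = p ^ k * u ∧ ¬ p ∣ u ∧ Nat.Coprime c p := by
  obtain ⟨c, hc⟩ : ∃ c, p ^ k = c + 1 :=
    ⟨p ^ k - 1, (Nat.sub_add_cancel (Nat.pow_pos hp.pos)).symm⟩
  have hdvd : p ∣ c + 1 := hc ▸ dvd_pow_self p (by omega)
  have hc0 : 0 < c := by
    have := Nat.le_of_dvd (by omega) hdvd
    have := hp.two_le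
    omega
  have hcp : Nat.Coprime c p :=
    Nat.Coprime.coprime_dvd_right hdvd (by simp)
  obtain ⟨d, rfl⟩ : ∃ d, c = d + 1 := ⟨c - 1, by omega⟩
  -- `u = c ^ 2 - c + 1` with `c = d + 1`, which is `3` modulo `c + 1`
  refine ⟨d + 1, d * (d + 1) + 1, hc0, by rw [hc]; ring, ?_, hcp⟩
  intro h
  have h3 : p ∣ 3 := by
    have e : (d + 1 + 1) * (d + 1) + 3 = (d * (d + 1) + 1) + 2 * (d + 1 + 1) := by ring
    have h' : p ∣ (d + 1 + 1) * (d + 1) + 3 :=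
      e ▸ dvd_add h (Dvd.dvd.mul_left hdvd 2)
    exact (Nat.dvd_add_right (Dvd.dvd.mul_right hdvd _)).1 h'
  exact hp3 ((Nat.prime_dvd_prime_iff_eq hp Nat.prime_three).1 h3)

/-- A witness for `recurrence` when `p = 3`: `c = 3 ^ (k - 1) - 1`, the factor `c ^ 2 - c + 1` contributing
one more power of `3`. -/
lemma exists_witness_three {k : ℕ} (hk : 2 ≤ k) :
    ∃ c u : ℕ, 0 < c ∧ 1 + c ^ 3 = 3 ^ k * u ∧ ¬ 3 ∣ u ∧ Nat.Coprime c 3 := by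
  obtain ⟨j, rfl⟩ : ∃ j, k = j + 2 := ⟨k - 2, by omega⟩
  obtain ⟨d, hd⟩ : ∃ d, 3 ^ j = d + 1 :=
    ⟨3 ^ j - 1, (Nat.sub_add_cancel (Nat.pow_pos (by norm_num))).symm⟩
  refine ⟨3 * d + 2, 3 * d ^ 2 + 3 * d + 1, by omega, ?_, by omega, ?_⟩
  · rw [pow_add, hd]; ring
  · rw [Nat.coprime_comm, Nat.Prime.coprime_iff_not_dvd Nat.prime_three]
    omega

/-- Three consecutive initial values and the three-step recurrence determine `f` on powers of `p`. -/
lemma pow_of_recurrence (f : ℕ → ℂ) (p k₀ : ℕ) (h3 : f (p ^ 3) = (p : ℂ) ^ 3)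
    (hrec : ∀ k, k₀ ≤ k → f (p ^ (k + 3)) = f (p ^ 3) * f (p ^ k))
    (b0 : f (p ^ k₀) = (p : ℂ) ^ k₀) (b1 : f (p ^ (k₀ + 1)) = (p : ℂ) ^ (k₀ + 1))
    (b2 : f (p ^ (k₀ + 2)) = (p : ℂ) ^ (k₀ + 2)) :
    ∀ r, k₀ ≤ r → f (p ^ r) = (p : ℂ) ^ r := by
  have key : ∀ n, f (p ^ (k₀ + n)) = (p : ℂ) ^ (k₀ + n) := by
    intro n
    induction n using Nat.strong_induction_on with
    | _ n ih =>
      match n, ih with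
      | 0, _ => exact b0
      | 1, _ => exact b1
      | 2, _ => exact b2
      | n + 3, ih =>
        rw [← add_assoc, hrec _ (by omega), ih n (by omega), h3]
        ring
  intro r hr
  obtain ⟨n, rfl⟩ := Nat.exists_eq_add_of_le hr
  exact key n

theorem cubes_two_prime_powers (f : ℕ → ℂ)
    (hf1 : f 1 = 1)
    (hmul : ∀ m n : ℕ, 0 < m → 0 < n → Nat.Coprime m n → f (m * n) = f m * f n)
    (hadd : ∀ a b : ℕ, 0 < a → 0 < b →
      f (a ^ 3 + b ^ 3) = f (a ^ 3) + f (b ^ 3)) :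
    (∀ r : ℕ, 1 ≤ r → f (2 ^ r) = 2 ^ r) ∧
    (∀ r : ℕ, 1 ≤ r → f (7 ^ r) = 7 ^ r) ∧
    (∀ r : ℕ, 2 ≤ r → f (3 ^ r) = 3 ^ r) := by
  obtain ⟨f2, f4, f8, f7, f49, f343, f9, f27, f81⟩ := small_values f hf1 hmul hadd
  have n2 : 1 < ‖f (2 ^ 3)‖ := by norm_num [f8]
  have n3 : 1 < ‖f (3 ^ 3)‖ := by norm_num [f27]
  refine ⟨?_, ?_, ?_⟩
  · refine pow_of_recurrence f 2 1 ?_ ?_ ?_ ?_ ?_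
    · norm_num [f8]
    · intro k hk
      obtain ⟨c, u, hc0, hc, hu, hcp⟩ := exists_witness Nat.prime_two (by norm_num) hk
      exact recurrence f hf1 hmul hadd Nat.prime_two hc0 hc hu hcp
        (q := 3) (by norm_num) (by norm_num) n3
    · norm_num [f2]
    · norm_num [f4]
    · norm_num [f8]
  · refine pow_of_recurrence f 7 1 ?_ ?_ ?_ ?_ ?_
    · norm_num [f343]
    · intro k hk
      have h7 : Nat.Prime 7 := by norm_num
      obtain ⟨c, u, hc0, hc, hu, hcp⟩ := exists_witness h7 (by norm_num) hk
      exact recurrence f hf1 hmul hadd h7 hc0 hc hu hcp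
        (q := 2) (by norm_num) (by norm_num) n2
    · norm_num [f7]
    · norm_num [f49]
    · norm_num [f343]
  · refine pow_of_recurrence f 3 2 ?_ ?_ ?_ ?_ ?_
    · norm_num [f27]
    · intro k hk
      obtain ⟨c, u, hc0, hc, hu, hcp⟩ := exists_witness_three hk
      exact recurrence f hf1 hmul hadd Nat.prime_three hc0 hc hu hcp
        (q := 2) (by norm_num) (by norm_num) n2
    · norm_num [f9]
    · norm_num [f27]
    · norm_num [f81]
end

section
/- Let f : ℕ → ℂ be a multiplicative function satisfying f(a³ + b³) = f(a³) + f(b³) for all positive integers a, b, and let p ≥ 5 be a prime. Assume that f(q^r) = q^r for every prime q < p and every integer r ≥ 1 with (q, r) ≠ (3, 1). Then f(p) = p. -/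
/-!
Write `p = k + 4` and `m = k² + 2k + 4`. The norm form `x² - xy + y²` takes the value `m` at both
`(k + 2, 2)` and `(k + 2, k)`, which gives the two factorizations
`(k + 2)³ + 2³ = p * m` and `(k + 2)³ + k³ = (2k + 2) * m`, each into coprime factors.

By `eq_self_of_smooth`, `f` fixes the cubes `2³`, `k³`, `(k + 2)³`, and also `2k + 2`, whose prime
factors are less than `p` and which is prime to `3` because `p` is. The second identity thus yields
`f m = m`, and the first then yields `f p = p`.
-/

/-- The condition `3 ∣ n → 9 ∣ n` excludes exactly the integers whose factorization involves the
undetermined value `f 3`. -/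
lemma eq_self_of_smooth (f : ℕ → ℂ) (hf1 : f 1 = 1)
    (hmul : ∀ m n : ℕ, 0 < m → 0 < n → Nat.Coprime m n → f (m * n) = f m * f n) (p : ℕ)
    (hind : ∀ q r : ℕ, q.Prime → q < p → 1 ≤ r → ¬(q = 3 ∧ r = 1) → f (q ^ r) = q ^ r)
    (n : ℕ) : 0 < n → (∀ q : ℕ, q.Prime → q ∣ n → q < p) → (3 ∣ n → 9 ∣ n) → f n = n := by
  induction n using Nat.recOnPosPrimePosCoprime with
  | prime_pow q r hq hr =>
    intro _ hs h3
    rw [hind q r hq (hs q hq (dvd_pow_self q hr.ne')) hr ?_]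
    · push_cast; rfl
    · rintro ⟨rfl, rfl⟩
      norm_num at h3
  | zero => intro h; omega
  | one => intros; simp [hf1]
  | coprime a b ha hb hab iha ihb =>
    intro _ hs h3
    have split : ∀ x y : ℕ, Nat.Coprime x y → (3 ∣ x * y → 9 ∣ x * y) → 3 ∣ x → 9 ∣ x := by
      intro x y hxy h hx
      have h9 : Nat.Coprime 9 y := by
        have : Nat.Coprime (3 ^ 2) y := (Nat.Coprime.coprime_dvd_left hx hxy).pow_left 2
        simpa using this
      exact h9.dvd_of_dvd_mul_right (h (hx.mul_right y))
    rw [hmul a b (by omega) (by omega) hab,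
      iha (by omega) (fun q hq h => hs q hq (h.mul_right b)) (split a b hab h3),
      ihb (by omega) (fun q hq h => hs q hq (h.mul_left a))
        (split b a hab.symm (by rwa [mul_comm b a]))]
    push_cast; rfl

theorem cubes_two_induction_p (f : ℕ → ℂ)
    (hf1 : f 1 = 1)
    (hmul : ∀ m n : ℕ, 0 < m → 0 < n → Nat.Coprime m n → f (m * n) = f m * f n)
    (hadd : ∀ a b : ℕ, 0 < a → 0 < b →
      f (a ^ 3 + b ^ 3) = f (a ^ 3) + f (b ^ 3))
    (p : ℕ) (hp : p.Prime) (hp5 : 5 ≤ p)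
    (hind : ∀ q r : ℕ, q.Prime → q < p → 1 ≤ r → ¬(q = 3 ∧ r = 1) →
      f (q ^ r) = q ^ r) :
    f p = p := by
  have smooth := eq_self_of_smooth f hf1 hmul p hind
  have cube : ∀ x : ℕ, 0 < x → x < p → f (x ^ 3) = x ^ 3 := by
    intro x hx hxp
    rw [smooth (x ^ 3) (by positivity)
      (fun q hq h => (Nat.le_of_dvd hx (hq.dvd_of_dvd_pow h)).trans_lt hxp) ?_]
    · push_cast; rfl
    · intro h
      have h3 : 3 ∣ x := Nat.prime_three.dvd_of_dvd_pow h
      exact (pow_dvd_pow_of_dvd h3 2).trans (pow_dvd_pow x (by norm_num))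
  have p2 : ¬ 2 ∣ p := fun h => by
    have := (Nat.prime_dvd_prime_iff_eq Nat.prime_two hp).1 h
    omega
  have p3 : ¬ 3 ∣ p := fun h => by
    have := (Nat.prime_dvd_prime_iff_eq Nat.prime_three hp).1 h
    omega
  obtain ⟨k, rfl⟩ : ∃ k, p = k + 4 := ⟨p - 4, by omega⟩
  have hk : 0 < k := by omega
  set m := k ^ 2 + 2 * k + 4 with hm
  have hm0 : 0 < m := by positivity
  -- `m = (k + 4) * (k - 2) + 12`, and `p ≥ 5` does not divide `12`.
  have cop1 : Nat.Coprime (k + 4) m := by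
    rw [hp.coprime_iff_not_dvd]
    intro h
    have h12 : k + 4 ∣ 2 ^ 2 * 3 := by
      have e : m + 2 * (k + 4) = (k + 4) * k + 2 ^ 2 * 3 := by rw [hm]; ring
      exact (Nat.dvd_add_right (dvd_mul_right _ _)).1 (e ▸ h.add (dvd_mul_left _ _))
    rcases (hp.dvd_mul).1 h12 with h | h
    · have := Nat.le_of_dvd (by norm_num) (hp.dvd_of_dvd_pow h)
      omega
    · have := Nat.le_of_dvd (by norm_num) h
      omega
  -- `m = (k + 1) ^ 2 + 3` is odd, and `3` does not divide `k + 1`.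
  have cop2 : Nat.Coprime (2 * (k + 1)) m := by
    have e : m = (k + 1) * (k + 1) + 3 := by rw [hm]; ring
    refine Nat.Coprime.mul_left ?_ ?_
    · rw [Nat.prime_two.coprime_iff_not_dvd, e]
      intro h
      have : 2 ∣ (k + 1) * (k + 1) := Dvd.dvd.mul_right (by omega) _
      omega
    · rw [e, Nat.coprime_mul_left_add_right, Nat.coprime_comm,
        Nat.prime_three.coprime_iff_not_dvd]
      omega
  have f2k : f (2 * (k + 1)) = (2 * (k + 1) : ℕ) := by
    refine smooth _ (by omega) ?_ (by omega)
    intro q hq h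
    rcases (hq.dvd_mul).1 h with h | h
    · have := Nat.le_of_dvd (by norm_num) h
      omega
    · have := Nat.le_of_dvd (by omega) h
      omega
  have mC : (m : ℂ) ≠ 0 := by exact_mod_cast hm0.ne'
  have fm : f m = m := by
    have h := hadd (k + 2) k (by omega) hk
    rw [show (k + 2) ^ 3 + k ^ 3 = 2 * (k + 1) * m by rw [hm]; ring,
      hmul _ _ (by omega) hm0 cop2, f2k, cube (k + 2) (by omega) (by omega),
      cube k hk (by omega)] at h
    have h0 : ((2 * (k + 1) : ℕ) : ℂ) ≠ 0 := by exact_mod_cast (by omega : 2 * (k + 1) ≠ 0)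
    apply mul_left_cancel₀ h0
    rw [h, hm]; push_cast; ring
  have h := hadd (k + 2) 2 (by omega) (by norm_num)
  rw [show (k + 2) ^ 3 + 2 ^ 3 = (k + 4) * m by rw [hm]; ring,
    hmul _ _ (by omega) hm0 cop1, fm, cube (k + 2) (by omega) (by omega),
    cube 2 (by omega) (by omega)] at h
  apply mul_right_cancel₀ mC
  rw [h, hm]; push_cast; ring
end

section
/- Let f : ℕ → ℂ be a multiplicative function satisfying f(a³ + b³) = f(a³) + f(b³) for all positive integers a, b, and let p ≥ 5 be a prime. Assume that f(q^r) = q^r for every prime q < p and every integer r ≥ 1 with (q, r) ≠ (3, 1). Then f(p² + 3) = p² + 3, f((p² + 1)³) = (p² + 1)³, and f(p⁴ + 3) = p⁴ + 3. -/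
/-!
The values of `f` are determined far beyond `p`: `f r = r` and `f (r ^ 3) = r ^ 3` hold for *every*
prime `r` with `p ≤ r < p ^ 2` (`Setting.fixedBelow`), by induction on `r`, and also
`f (p ^ 2) = p ^ 2`. By multiplicativity `f` then fixes `p ^ 2 + 3` and `(p ^ 2 + 1) ^ 3`, whose
prime factors are below `p ^ 2`, those above `p` occurring to the power `1`, respectively `3`.
Finally `(p² + 1)³ + (p² - 1)³ = 2p²(p⁴ + 3)` gives the value at `p ^ 4 + 3`.

*The value at `q`* (a prime in `[p, p²)`, or `q = p²`), `Setting.eq_of_split`. Write `q = a + b`, so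
that `a³ + b³ = q N` with `N = a² - ab + b²`. If `N = n c` with `n, c < q` and no prime `r ≥ p`
divides both `n` and `c`, then `f` is known at `a³`, `b³` and `N`, hence at `q`.
To find such a splitting, take `n` with `q / 3 < n < q` and a root `t` of `t² + t + 1` modulo `n`.
The conditions `a ≡ -t b` and `a + b = q` fix `b` modulo `n`, and force `n ∣ N`; placing `b` within
`n / 2` of `q / 2` gives `4N ≤ q² + 3n² < 4qn`, that is `c < q`. The numbers `7 ^ i`,
`13 * 7 ^ i`, `19 * 7 ^ i` are dense enough to provide `n`, and their prime factors are below `p`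
if `p > 19`. For `17 ≤ q ≤ 361` a splitting with `n` and `c` coprime is found by direct search, and
`q = 5, 7, 11, 13` are treated by explicit sums of two cubes.

*The value at `q ^ 3`*, `Setting.cube_eq`. With `k = 1` or `5` such that `3 ∣ q + k`, the sums
`q³ + k³ = (q + k) N` and `q³ + (q - k)³ = (2q - k) N` share the factor `N = q² - qk + k²`. This
gives two independent linear equations for the unknowns `f (q ^ 3)` and `f (N / 3)`.
-/

/-! ### Splitting `a² - ab + b²` with `a + b` prescribed -/

/-- Hensel lifting at `7`: the derivative `2t + 1` is a unit modulo `7`. -/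
theorem exists_root_step (n t : ℕ) (h7 : 7 ∣ n) (hn : n ∣ t ^ 2 + t + 1) :
    ∃ s, 7 * n ∣ s ^ 2 + s + 1 := by
  obtain ⟨w, hw⟩ := hn
  obtain ⟨m, rfl⟩ := h7
  have ht : t % 7 = 2 ∨ t % 7 = 4 := by
    have h0 : (t ^ 2 + t + 1) % 7 = 0 := by rw [hw, mul_assoc]; exact Nat.mul_mod_right _ _
    have h1 : t % 7 < 7 := Nat.mod_lt _ (by norm_num)
    rw [Nat.add_mod, Nat.add_mod (t ^ 2), Nat.pow_mod] at h0
    interval_cases t % 7 <;> simp_all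
  rcases ht with ht | ht
  · obtain ⟨u, rfl⟩ : ∃ u, t = 7 * u + 2 := ⟨t / 7, by omega⟩
    refine ⟨7 * u + 2 + 7 * m * (4 * w), 3 * w + 8 * w * u + m * (4 * w) ^ 2, ?_⟩
    linear_combination hw
  · obtain ⟨u, rfl⟩ : ∃ u, t = 7 * u + 4 := ⟨t / 7, by omega⟩
    refine ⟨7 * u + 4 + 7 * m * (3 * w), 4 * w + 6 * w * u + m * (3 * w) ^ 2, ?_⟩
    linear_combination hw

/-- A modulus `n` in `(q / 3, q)` of the form `7 ^ i`, `13 * 7 ^ i` or `19 * 7 ^ i` with a root of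
`t² + t + 1`. Multiplying the modulus found for `⌈q / 7⌉` by `7` gives the one for `q`. -/
theorem exists_modulus (q : ℕ) (hq : 50 ≤ q) :
    ∃ n t : ℕ, n < q ∧ q < 3 * n ∧ 7 ∣ n ∧ n ∣ t ^ 2 + t + 1 ∧
      ∀ r : ℕ, r.Prime → r ∣ n → r = 7 ∨ r = 13 ∨ r = 19 := by
  induction q using Nat.strong_induction_on with
  | _ q ih =>
  have h7 : Nat.Prime 7 := by norm_num
  have h13 : Nat.Prime 13 := by norm_num
  have h19 : Nat.Prime 19 := by norm_num
  rcases lt_or_ge q 344 with h | h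
  · rcases lt_or_ge q 140 with h1 | h1
    · refine ⟨49, 18, by omega, by omega, by norm_num, by norm_num, fun r hr hd => ?_⟩
      rw [show 49 = 7 * 7 by norm_num, hr.dvd_mul, Nat.prime_dvd_prime_iff_eq hr h7] at hd
      tauto
    rcases lt_or_ge q 250 with h2 | h2
    · refine ⟨91, 9, by omega, by omega, by norm_num, by norm_num, fun r hr hd => ?_⟩
      rw [show 91 = 7 * 13 by norm_num, hr.dvd_mul, Nat.prime_dvd_prime_iff_eq hr h7,
        Nat.prime_dvd_prime_iff_eq hr h13] at hd
      tauto
    · refine ⟨133, 11, by omega, by omega, by norm_num, by norm_num, fun r hr hd => ?_⟩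
      rw [show 133 = 7 * 19 by norm_num, hr.dvd_mul, Nat.prime_dvd_prime_iff_eq hr h7,
        Nat.prime_dvd_prime_iff_eq hr h19] at hd
      tauto
  · obtain ⟨n, t, h1, h2, h3, h4, h5⟩ := ih ((q + 6) / 7) (by omega) (by omega)
    obtain ⟨s, hs⟩ := exists_root_step n t h3 h4
    refine ⟨7 * n, s, by omega, by omega, by omega, hs, fun r hr hd => ?_⟩
    rw [hr.dvd_mul, Nat.prime_dvd_prime_iff_eq hr h7] at hd
    rcases hd with hd | hd
    · exact Or.inl hd
    · exact h5 r hr hd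

/-- A root of `t² + t + 1` modulo `n`, where `q / 3 < n < q`, yields `a + b = q` with
`a² - ab + b² = n c` and `c < q`. -/
theorem exists_split_of_root (q n t : ℕ) (h3 : ¬ 3 ∣ n) (hnq : n < q) (hqn : q < 3 * n)
    (hn : n ∣ t ^ 2 + t + 1) :
    ∃ a b c : ℕ, 0 < a ∧ 0 < b ∧ a + b = q ∧ a ^ 2 + b ^ 2 = n * c + a * b ∧ c < q := by
  have hcop : IsCoprime (3 : ℤ) (n : ℤ) := by
    exact_mod_cast Nat.isCoprime_iff_coprime.mpr
      ((Nat.prime_three.coprime_iff_not_dvd).mpr h3)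
  obtain ⟨u, v, huv⟩ := hcop
  have hn0 : (0 : ℤ) < n := by omega
  obtain ⟨L, hL1, hL2⟩ : ∃ L : ℤ, (q : ℤ) - n ≤ 2 * L ∧ 2 * L ≤ q - n + 1 :=
    ⟨((q : ℤ) - n + 1) / 2, by omega, by omega⟩
  -- `b` is the solution of `3b ≡ (t + 2) q` modulo `n` in `[L, L + n - 1]`, centred at `q / 2`;
  -- as `(1 - t)(t + 2) ≡ 3`, this says `(1 - t) b ≡ q`, that is `q - b ≡ -t b`
  set b0 : ℤ := (t + 2) * q * u with hb0
  set b : ℤ := L + (b0 - L) % n with hb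
  have hb1 : L ≤ b := by have := Int.emod_nonneg (b0 - L) hn0.ne'; omega
  have hb2 : b ≤ L + n - 1 := by have := Int.emod_lt_of_pos (b0 - L) hn0; omega
  obtain ⟨k, hk⟩ : ∃ k : ℤ, 3 * b = (t + 2) * q + n * k := by
    have h := Int.mul_ediv_add_emod (b0 - L) n
    refine ⟨-(t + 2) * q * v - 3 * ((b0 - L) / n), ?_⟩
    have : b = b0 - n * ((b0 - L) / n) := by omega
    rw [this, hb0]
    linear_combination ((t : ℤ) + 2) * q * huv
  obtain ⟨w, hw⟩ := hn
  have hwz : (t : ℤ) ^ 2 + t + 1 = n * w := by exact_mod_cast hw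
  have hdvd : (n : ℤ) ∣ (q - b) ^ 2 - (q - b) * b + b ^ 2 := by
    have hthree : (n : ℤ) ∣ 3 * ((q - b) ^ 2 - (q - b) * b + b ^ 2) := by
      refine ⟨q ^ 2 * w + k * (2 * (t + 2) * q + n * k - 3 * q), ?_⟩
      linear_combination (3 * b + (t + 2) * q + n * k - 3 * q) * hk + (q : ℤ) ^ 2 * hwz
    exact IsCoprime.dvd_of_dvd_mul_left (IsCoprime.symm ⟨u, v, huv⟩) hthree
  obtain ⟨c, hc⟩ := hdvd
  have hbpos : 0 < b := by omega
  have hapos : 0 < (q : ℤ) - b := by omega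
  have hc0 : 0 ≤ c := by
    by_contra hneg
    push Not at hneg
    nlinarith [mul_pos hapos hbpos, sq_nonneg ((q : ℤ) - b - b)]
  -- `4 (a² - ab + b²) = q² + 3 (2b - q)² ≤ q² + 3n² < 4qn`, as `(q - n)(q - 3n) < 0`
  have hcq : c < q := by
    have hs : (2 * b - q) ^ 2 ≤ (n : ℤ) ^ 2 := sq_le_sq' (by omega) (by omega)
    have hprod : ((q : ℤ) - n) * (3 * n - q) > 0 := mul_pos (by omega) (by omega)
    have : (n : ℤ) * c < n * q := by nlinarith
    exact lt_of_mul_lt_mul_left this hn0.le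
  lift c to ℕ using hc0
  generalize hbb : b = B at *
  lift B to ℕ using hbpos.le
  refine ⟨q - B, B, c, by omega, by omega, by omega, ?_, by omega⟩
  zify [show B ≤ q by omega]
  linear_combination hc

/-- In the range `[17, 361]` a splitting with coprime factors exists; `n` is taken from a short
list of numbers whose prime factors are `1` modulo `3`. -/
theorem exists_split_small (q : ℕ) (h1 : 17 ≤ q) (h2 : q ≤ 361) (h3 : ¬ 2 ∣ q) (h4 : ¬ 3 ∣ q) :
    ∃ a b n c : ℕ, 0 < a ∧ 0 < b ∧ a + b = q ∧ a ^ 2 + b ^ 2 = n * c + a * b ∧ n < q ∧ c < q ∧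
      Nat.Coprime n c := by
  have key : ∀ q < 362, 17 ≤ q → ¬ 2 ∣ q → ¬ 3 ∣ q →
      ([7, 13, 19, 31, 37, 43, 61, 67, 73, 79, 91, 97, 103, 109, 127].any fun n =>
        (List.range q).any fun a =>
          let c := (q ^ 2 - 3 * a * (q - a)) / n
          decide (a ^ 2 + (q - a) ^ 2 = n * c + a * (q - a) ∧ 0 < a ∧ n < q ∧ c < q ∧
            Nat.gcd n c = 1)) = true := by
    decide +kernel
  have h := key q (by omega) h1 h3 h4
  simp only [List.any_eq_true, List.mem_range, decide_eq_true_eq] at h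
  obtain ⟨n, -, a, haq, heq, ha, hn, hc, hcop⟩ := h
  exact ⟨a, q - a, n, _, ha, by omega, by omega, heq, hn, hc, hcop⟩

/-! ### Numbers fixed by `f` -/

/-- The standing hypotheses on `f` and `p`. -/
structure Setting (f : ℕ → ℂ) (p : ℕ) : Prop where
  one : f 1 = 1
  mul : ∀ m n : ℕ, 0 < m → 0 < n → Nat.Coprime m n → f (m * n) = f m * f n
  add : ∀ a b : ℕ, 0 < a → 0 < b → f (a ^ 3 + b ^ 3) = f (a ^ 3) + f (b ^ 3)
  prime : p.Prime
  five : 5 ≤ p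
  ind : ∀ q r : ℕ, q.Prime → q < p → 1 ≤ r → ¬(q = 3 ∧ r = 1) → f (q ^ r) = q ^ r

/-- `f` fixes every prime in `[p, q)` and its cube. -/
def FixedBelow (f : ℕ → ℂ) (p q : ℕ) : Prop :=
  ∀ r : ℕ, r.Prime → p ≤ r → r < q → f r = r ∧ f (r ^ 3) = (r : ℂ) ^ 3

/-- `m` is positive, its prime factors are below `q`, and those that are at least `p` divide `m`
exactly once. -/
def Tame (p q m : ℕ) : Prop :=
  0 < m ∧ ∀ r : ℕ, r.Prime → r ∣ m → r < q ∧ (p ≤ r → ¬ r ^ 2 ∣ m)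

namespace Setting

variable {f : ℕ → ℂ} {p : ℕ}

theorem eq_of_prime_powers (S : Setting f p) {N : ℕ} (hN : N ≠ 0)
    (h : ∀ r : ℕ, r.Prime → r ∣ N → f (r ^ N.factorization r) = (r : ℂ) ^ N.factorization r) :
    f N = N := by
  have hm : ∀ x y : ℕ, Nat.Coprime x y → f (x * y) = f x * f y := by
    intro x y hxy
    rcases Nat.eq_zero_or_pos x with rfl | hx
    · obtain rfl : y = 1 := by simpa using hxy
      simp [S.one]
    rcases Nat.eq_zero_or_pos y with rfl | hy
    · obtain rfl : x = 1 := by simpa using hxy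
      simp [S.one]
    exact S.mul x y hx hy hxy
  rw [Nat.multiplicative_factorization f hm S.one hN]
  conv_rhs => rw [← Nat.prod_factorization_pow_eq_self hN]
  rw [Finsupp.prod, Finsupp.prod, Nat.cast_prod]
  refine Finset.prod_congr rfl fun r hr => ?_
  have hmem := Nat.support_factorization N ▸ hr
  rw [h r (Nat.prime_of_mem_primeFactors hmem) (Nat.dvd_of_mem_primeFactors hmem)]
  push_cast
  rfl

theorem factorization_of_tame {q m r : ℕ} (T : Tame p q m) (hr : r.Prime) (hd : r ∣ m)
    (hpr : p ≤ r) : m.factorization r = 1 := by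
  have h1 := (hr.dvd_iff_one_le_factorization T.1.ne').mp hd
  have h2 : ¬ 2 ≤ m.factorization r := fun h =>
    (T.2 r hr hd).2 hpr ((hr.pow_dvd_iff_le_factorization T.1.ne').mpr h)
  omega

theorem eq_of_tame (S : Setting f p) {q m : ℕ} (K : FixedBelow f p q) (T : Tame p q m)
    (h3 : 3 ∣ m → 9 ∣ m) : f m = m := by
  refine S.eq_of_prime_powers T.1.ne' fun r hr hd => ?_
  have h1 := (hr.dvd_iff_one_le_factorization T.1.ne').mp hd
  rcases lt_or_ge r p with hrp | hrp
  · refine S.ind r _ hr hrp h1 ?_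
    rintro ⟨rfl, h⟩
    have := (hr.pow_dvd_iff_le_factorization (k := 2) T.1.ne').mp (h3 hd)
    omega
  · rw [factorization_of_tame T hr hd hrp, pow_one, pow_one]
    exact (K r hr hrp (T.2 r hr hd).1).1

theorem cube_eq_of_tame (S : Setting f p) {q m : ℕ} (K : FixedBelow f p q) (T : Tame p q m) :
    f (m ^ 3) = (m : ℂ) ^ 3 := by
  rw [S.eq_of_prime_powers (pow_ne_zero 3 T.1.ne'), Nat.cast_pow]
  intro r hr hd
  have hd := hr.dvd_of_dvd_pow hd
  have h1 := (hr.dvd_iff_one_le_factorization T.1.ne').mp hd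
  have h2 : (m ^ 3).factorization r = 3 * m.factorization r := by simp
  rw [h2]
  rcases lt_or_ge r p with hrp | hrp
  · exact S.ind r _ hr hrp (by omega) (by omega)
  · rw [factorization_of_tame T hr hd hrp, mul_one]
    exact (K r hr hrp (T.2 r hr hd).1).2

theorem tame_of_lt {q m : ℕ} (hq : q ≤ p ^ 2) (h0 : 0 < m) (hm : m < q) : Tame p q m := by
  refine ⟨h0, fun r hr hd => ⟨(Nat.le_of_dvd h0 hd).trans_lt hm, fun hpr hd2 => ?_⟩⟩
  have h1 := Nat.le_of_dvd h0 hd2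
  have h2 := Nat.pow_le_pow_left hpr 2
  omega

theorem tame_nine_mul (S : Setting f p) {q m : ℕ} (hpq : p ≤ q) (hq : q ≤ p ^ 2) (h0 : 0 < m)
    (hm : m < q) : Tame p q (9 * m) := by
  have h5 := S.five
  refine ⟨by omega, fun r hr hd => ?_⟩
  have T := tame_of_lt hq h0 hm
  rw [show 9 * m = 3 ^ 2 * m by ring] at hd ⊢
  constructor
  · rcases hr.dvd_mul.mp hd with h | h
    · have := Nat.le_of_dvd (by norm_num) (hr.dvd_of_dvd_pow h)
      omega
    · exact (T.2 r hr h).1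
  · intro hpr hd2
    have hc : Nat.Coprime (r ^ 2) (3 ^ 2) :=
      Nat.Coprime.pow _ _ ((Nat.coprime_primes hr Nat.prime_three).mpr (by omega))
    have h2 := hc.dvd_of_dvd_mul_left hd2
    exact (T.2 r hr (dvd_trans (dvd_pow_self r two_ne_zero) h2)).2 hpr h2

/-! ### The values at `q` and `q ^ 3` -/

/-- If `q = a + b` and `a² - ab + b² = n c` splits suitably, then `a³ + b³ = q n c` determines
`f q`. -/
theorem eq_of_split (S : Setting f p) {q : ℕ} (K : FixedBelow f p q) (hpq : p ≤ q)
    (hq : q.Prime ∧ q ≤ p ^ 2 ∨ q = p ^ 2) {a b n c : ℕ} (ha : 0 < a) (hb : 0 < b)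
    (hab : a + b = q) (hnc : a ^ 2 + b ^ 2 = n * c + a * b) (hn : n < q) (hc : c < q)
    (hcop : ∀ r : ℕ, r.Prime → p ≤ r → r ∣ n → ¬ r ∣ c) : f q = q := by
  have h5 := S.five
  have hqp : q ≤ p ^ 2 := by rcases hq with h | h; exacts [h.2, h.le]
  have hN : 0 < n * c := by
    zify at hnc ha hb ⊢
    nlinarith [sq_nonneg ((a : ℤ) - b), mul_pos ha hb]
  have hn0 : 0 < n := Nat.pos_of_mul_pos_right hN
  have hc0 : 0 < c := Nat.pos_of_mul_pos_left hN
  -- otherwise `r² ∣ n` or `r² ∣ c`, although `n, c < q ≤ p² ≤ r²`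
  have hsq : ∀ r : ℕ, r.Prime → p ≤ r → ¬ r ^ 2 ∣ n * c := by
    intro r hr hpr hd
    have hpr2 := Nat.pow_le_pow_left hpr 2
    by_cases hrn : r ∣ n
    · have h1 : r ^ 2 ∣ n :=
        (Nat.Coprime.pow_left 2
          ((hr.coprime_iff_not_dvd).mpr (hcop r hr hpr hrn))).dvd_of_dvd_mul_right hd
      have := Nat.le_of_dvd hn0 h1
      omega
    · have h1 : r ^ 2 ∣ c :=
        (Nat.Coprime.pow_left 2 ((hr.coprime_iff_not_dvd).mpr hrn)).dvd_of_dvd_mul_left hd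
      have := Nat.le_of_dvd hc0 h1
      omega
  have hq3 : ¬ 3 ∣ q := by
    intro h
    rcases hq with hq | hq
    · have := (Nat.prime_dvd_prime_iff_eq Nat.prime_three hq.1).mp h
      omega
    · rw [hq] at h
      have := (Nat.prime_dvd_prime_iff_eq Nat.prime_three S.prime).mp
        (Nat.prime_three.dvd_of_dvd_pow h)
      omega
  have hsum : q ^ 2 = n * c + 3 * (a * b) := by subst hab; linear_combination hnc
  have hN3 : ¬ 3 ∣ n * c := fun h => hq3 (Nat.prime_three.dvd_of_dvd_pow
    (hsum ▸ dvd_add h (dvd_mul_right 3 _)))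
  have hT : Tame p q (n * c) := by
    refine ⟨hN, fun r hr hd => ⟨?_, fun hpr => hsq r hr hpr⟩⟩
    rcases hr.dvd_mul.mp hd with h | h
    · exact (Nat.le_of_dvd hn0 h).trans_lt hn
    · exact (Nat.le_of_dvd hc0 h).trans_lt hc
  -- a common prime factor of `q` and `n * c` divides `3ab`, hence both `a` and `b`: impossible for
  -- prime `q > a`, while for `q = p²` it would make `p² ∣ n * c`
  have hqN : Nat.Coprime q (n * c) := by
    refine Nat.coprime_of_dvd fun r hr hrq hrN => ?_
    have hr3 : r ≠ 3 := by rintro rfl; exact hq3 hrq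
    have hab' : r ∣ a * b := by
      have h1 : r ∣ 3 * (a * b) :=
        (Nat.dvd_add_right hrN).mp (hsum ▸ dvd_pow hrq two_ne_zero)
      rcases hr.dvd_mul.mp h1 with h | h
      · exact absurd ((Nat.prime_dvd_prime_iff_eq hr Nat.prime_three).mp h) hr3
      · exact h
    have hra : r ∣ a ∧ r ∣ b := by
      rcases hr.dvd_mul.mp hab' with h | h
      · exact ⟨h, (Nat.dvd_add_right h).mp (hab ▸ hrq)⟩
      · exact ⟨(Nat.dvd_add_left h).mp (hab ▸ hrq), h⟩
    rcases hq with hq | hq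
    · have h1 := (Nat.prime_dvd_prime_iff_eq hr hq.1).mp hrq
      have h2 := Nat.le_of_dvd ha hra.1
      omega
    · have h1 := (Nat.prime_dvd_prime_iff_eq hr S.prime).mp (hr.dvd_of_dvd_pow (hq ▸ hrq))
      refine hsq r hr h1.ge ?_
      obtain ⟨⟨x, rfl⟩, ⟨y, rfl⟩⟩ := hra
      have h2 : r ^ 2 ∣ n * c + r * x * (r * y) := hnc ▸ ⟨x ^ 2 + y ^ 2, by ring⟩
      exact (Nat.dvd_add_left ⟨x * y, by ring⟩).mp h2
  have hfN := S.eq_of_tame K hT (fun h => absurd h hN3)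
  have hadd := S.add a b ha hb
  rw [S.cube_eq_of_tame K (tame_of_lt hqp ha (by omega)),
    S.cube_eq_of_tame K (tame_of_lt hqp hb (by omega)),
    show a ^ 3 + b ^ 3 = q * (n * c) by subst hab; linear_combination ((a : ℕ) + b) * hnc,
    S.mul q (n * c) (by omega) hN hqN, hfN] at hadd
  have hNC : ((n * c : ℕ) : ℂ) ≠ 0 := by exact_mod_cast hN.ne'
  have hncC : (a : ℂ) ^ 2 + b ^ 2 = ((n * c : ℕ) : ℂ) + a * b := by exact_mod_cast hnc
  have habC : (a : ℂ) + b = q := by exact_mod_cast hab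
  refine mul_right_cancel₀ hNC ?_
  rw [hadd, ← habC]
  linear_combination ((a : ℂ) + b) * hncC

/-- `f (q ^ 3)` from the two sums of cubes `q³ + k³` and `q³ + (q - k)³`. -/
theorem cube_eq (S : Setting f p) {q : ℕ} (K : FixedBelow f p q) (hpq : p ≤ q)
    (hq : q.Prime) (hqp : q ≤ p ^ 2) : f (q ^ 3) = (q : ℂ) ^ 3 := by
  have h5 := S.five
  obtain ⟨k, j, hk, hkq, hj, hk2, hk3⟩ : ∃ k j : ℕ, 0 < k ∧ k < q ∧ q + k = 3 * j ∧ ¬ 2 ∣ k ∧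
      ¬ 3 ∣ k := by
    have h3 : ¬ 3 ∣ q := fun h => by
      have := (Nat.prime_dvd_prime_iff_eq Nat.prime_three hq).mp h
      omega
    rcases (show q % 3 = 2 ∨ q % 3 = 1 by omega) with h | h
    · exact ⟨1, (q + 1) / 3, by omega, by omega, by omega, by omega, by omega⟩
    · exact ⟨5, (q + 5) / 3, by omega, by omega, by omega, by omega, by omega⟩
  have hq2 : ¬ 2 ∣ q := fun h => by
    have := (Nat.prime_dvd_prime_iff_eq Nat.prime_two hq).mp h
    omega
  obtain ⟨i, hi⟩ : ∃ i, i + k = 2 * j := ⟨2 * j - k, by omega⟩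
  have hj0 : 0 < j := by omega
  have hi0 : 0 < i := by omega
  have hij : i ≠ j := by omega
  -- `q² - qk + k² = 3M` with `M = 3j² - 3jk + k²` prime to `3`
  obtain ⟨M, hM⟩ : ∃ M, M + 3 * j * k = 3 * j ^ 2 + k ^ 2 := by
    refine ⟨3 * j ^ 2 + k ^ 2 - 3 * j * k, Nat.sub_add_cancel ?_⟩
    zify
    nlinarith [sq_nonneg (2 * (j : ℤ) - k)]
  have hM4 : 4 * M = 3 * i ^ 2 + k ^ 2 := by
    zify at hM hi ⊢
    linear_combination 4 * hM - 3 * (i - k + 2 * j : ℤ) * hi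
  have hM0 : 0 < M := by have := pow_pos hk 2; omega
  have hM3 : ¬ 3 ∣ M := by
    intro h
    refine hk3 (Nat.prime_three.dvd_of_dvd_pow (n := 2) ?_)
    have : 3 ∣ 3 * i ^ 2 + k ^ 2 := hM4 ▸ dvd_mul_of_dvd_right h 4
    exact (Nat.dvd_add_right (dvd_mul_right 3 _)).mp this
  have hkj : ∀ r : ℕ, r.Prime → r ∣ k → ¬ r ∣ j := by
    intro r hr h1 h2
    have h3 : r ∣ q := (Nat.dvd_add_left h1).mp (hj ▸ dvd_mul_of_dvd_right h2 3)
    have h4 := (Nat.prime_dvd_prime_iff_eq hr hq).mp h3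
    have h5 := Nat.le_of_dvd hk h1
    omega
  have hcop9 : Nat.Coprime 9 M := by
    have := Nat.Coprime.pow_left 2 (Nat.prime_three.coprime_iff_not_dvd.mpr hM3)
    exact this
  have hcj : Nat.Coprime (9 * j) M := by
    refine Nat.Coprime.mul_left hcop9 (Nat.coprime_of_dvd fun r hr h1 h2 => ?_)
    refine hkj r hr (hr.dvd_of_dvd_pow (n := 2) ?_) h1
    have h3 : r ∣ 3 * j ^ 2 + k ^ 2 :=
      hM ▸ dvd_add h2 (dvd_mul_of_dvd_left (dvd_mul_of_dvd_right h1 3) k)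
    exact (Nat.dvd_add_right (dvd_mul_of_dvd_right (dvd_pow h1 two_ne_zero) 3)).mp h3
  have hci : Nat.Coprime (9 * i) M := by
    refine Nat.Coprime.mul_left hcop9 (Nat.coprime_of_dvd fun r hr h1 h2 => ?_)
    have h3 : r ∣ k := by
      refine hr.dvd_of_dvd_pow (n := 2) ?_
      have h3 : r ∣ 3 * i ^ 2 + k ^ 2 := hM4 ▸ dvd_mul_of_dvd_right h2 4
      exact (Nat.dvd_add_right (dvd_mul_of_dvd_right (dvd_pow h1 two_ne_zero) 3)).mp h3
    have h4 : r ∣ 2 * j := hi ▸ dvd_add h1 h3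
    rcases hr.dvd_mul.mp h4 with h | h
    · rw [(Nat.prime_dvd_prime_iff_eq hr Nat.prime_two).mp h] at h3
      exact hk2 h3
    · exact hkj r hr h3 h
  have e1 := S.add q k hq.pos hk
  have e2 := S.add q (q - k) hq.pos (by omega)
  have i1 : q ^ 3 + k ^ 3 = 9 * j * M := by
    zify at hM hj ⊢
    rw [show (k : ℤ) = 3 * j - q by linarith] at hM ⊢
    linear_combination (-9 * (j : ℤ)) * hM
  have i2 : q ^ 3 + (q - k) ^ 3 = 9 * i * M := by
    zify [hkq.le] at hM hj hi ⊢
    rw [show (i : ℤ) = q - j by linarith]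
    rw [show (k : ℤ) = 3 * j - q by linarith] at hM ⊢
    linear_combination (-9 * ((q : ℤ) - j)) * hM
  have fj := S.eq_of_tame K (S.tame_nine_mul hpq hqp hj0 (by omega)) (fun _ => dvd_mul_right 9 j)
  have fi := S.eq_of_tame K (S.tame_nine_mul hpq hqp hi0 (by omega)) (fun _ => dvd_mul_right 9 i)
  rw [i1, S.mul _ _ (by omega) hM0 hcj, fj, S.cube_eq_of_tame K (tame_of_lt hqp hk hkq)] at e1
  rw [i2, S.mul _ _ (by omega) hM0 hci, fi,
    S.cube_eq_of_tame K (tame_of_lt (m := q - k) hqp (by omega) (by omega))] at e2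
  have c1 : (q : ℂ) ^ 3 + k ^ 3 = 9 * j * M := by exact_mod_cast i1
  have c2 : (q : ℂ) ^ 3 + ((q - k : ℕ) : ℂ) ^ 3 = 9 * i * M := by exact_mod_cast i2
  push_cast at e1 e2
  have hijC : (9 * (i : ℂ) - 9 * j) ≠ 0 := by
    intro h
    exact hij (by exact_mod_cast (show (i : ℂ) = j by linear_combination h / 9))
  have hfM : f M = M := by
    refine mul_left_cancel₀ hijC ?_
    linear_combination e2 - e1 + c2 - c1
  rw [hfM] at e1
  linear_combination -c1 - e1

/-- The primes `5, 7, 11, 13`, from `5³ + 1³ = 2·3²·7`, `5³ + 4³ = 3³·7`, `6³ + 4³ = 2³·5·7`,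
`4³ + 1³ = 5·13` and `10³ + 1³ = 7·11·13`. -/
theorem eq_of_lt_seventeen (S : Setting f p) {q : ℕ} (K : FixedBelow f p q) (hpq : p ≤ q)
    (hq : q.Prime) (hqp : q ≤ p ^ 2) (h17 : q < 17) : f q = q := by
  have h5 := S.five
  have hcase : q = 5 ∨ q = 7 ∨ q = 11 ∨ q = 13 := by
    have : 5 ≤ q := by omega
    interval_cases q <;> first | omega | (exfalso; revert hq; decide)
  have lin : ∀ m : ℕ, 0 < m → m < q → (3 ∣ m → 9 ∣ m) → f m = m := fun m h0 hm h3 =>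
    S.eq_of_tame K (tame_of_lt hqp h0 hm) h3
  have cub : ∀ m : ℕ, 0 < m → m < q → f (m ^ 3) = (m : ℂ) ^ 3 := fun m h0 hm =>
    S.cube_eq_of_tame K (tame_of_lt hqp h0 hm)
  have f13 : 5 < q → f 13 = 13 := by
    intro h
    have e := S.add 4 1 (by norm_num) (by norm_num)
    rw [cub 4 (by omega) (by omega), show (4 : ℕ) ^ 3 + 1 ^ 3 = 5 * 13 by norm_num,
      S.mul 5 13 (by norm_num) (by norm_num) (by norm_num), lin 5 (by omega) h (by omega),
      one_pow, S.one] at e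
    push_cast at e
    linear_combination e / 5
  rcases hcase with rfl | rfl | rfl | rfl
  · obtain rfl : p = 5 := by omega
    have p2 : ∀ r, 1 ≤ r → f (2 ^ r) = 2 ^ r := fun r hr => by
      exact_mod_cast S.ind 2 r Nat.prime_two (by omega) hr (by omega)
    have p3 : ∀ r, 2 ≤ r → f (3 ^ r) = 3 ^ r := fun r hr => by
      exact_mod_cast S.ind 3 r Nat.prime_three (by omega) (by omega) (by omega)
    have e1 := S.add 5 1 (by norm_num) (by norm_num)
    have e2 := S.add 5 4 (by norm_num) (by norm_num)
    have e3 := S.add 6 4 (by norm_num) (by norm_num)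
    rw [show 5 ^ 3 + 1 ^ 3 = 2 ^ 1 * (3 ^ 2 * 7) by norm_num,
      S.mul _ _ (by norm_num) (by norm_num) (by norm_num),
      S.mul _ _ (by norm_num) (by norm_num) (by norm_num), p2 1 le_rfl, p3 2 le_rfl,
      one_pow, S.one] at e1
    rw [show 5 ^ 3 + 4 ^ 3 = 3 ^ 3 * 7 by norm_num, cub 4 (by norm_num) (by norm_num),
      S.mul _ _ (by norm_num) (by norm_num) (by norm_num), p3 3 (by norm_num)] at e2
    rw [show 6 ^ 3 + 4 ^ 3 = 2 ^ 3 * (5 * 7) by norm_num, cub 4 (by norm_num) (by norm_num),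
      show 6 ^ 3 = 2 ^ 3 * 3 ^ 3 by norm_num,
      S.mul _ _ (by norm_num) (by norm_num) (by norm_num),
      S.mul _ _ (by norm_num) (by norm_num) (by norm_num),
      S.mul _ _ (by norm_num) (by norm_num) (by norm_num), p3 3 (by norm_num),
      p2 3 (by norm_num)] at e3
    push_cast at e1 e2 e3 ⊢
    have f7 : f 7 = 7 := by linear_combination (e2 - e1) / 9
    rw [f7] at e3
    linear_combination e3 / 56
  · have e := S.add 4 5 (by norm_num) (by norm_num)
    rw [cub 4 (by norm_num) (by norm_num), cub 5 (by norm_num) (by norm_num),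
      show 4 ^ 3 + 5 ^ 3 = 3 ^ 3 * 7 by norm_num,
      S.mul _ _ (by norm_num) (by norm_num) (by norm_num), cub 3 (by norm_num) (by norm_num)] at e
    push_cast at e ⊢
    linear_combination e / 27
  · have e := S.add 10 1 (by norm_num) (by norm_num)
    rw [cub 10 (by norm_num) (by norm_num), show 10 ^ 3 + 1 ^ 3 = 7 * (13 * 11) by norm_num,
      S.mul _ _ (by norm_num) (by norm_num) (by norm_num),
      S.mul _ _ (by norm_num) (by norm_num) (by norm_num), lin 7 (by norm_num) (by norm_num)
      (by norm_num), f13 (by norm_num), one_pow, S.one] at e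
    push_cast at e ⊢
    linear_combination e / 91
  · exact_mod_cast f13 (by norm_num)

/-- The induction step for `f q`, including the case `q = p ^ 2`. -/
theorem eq_of_fixedBelow (S : Setting f p) {q : ℕ} (K : FixedBelow f p q) (hpq : p ≤ q)
    (hq : q.Prime ∧ q ≤ p ^ 2 ∨ q = p ^ 2) : f q = q := by
  have h5 := S.five
  rcases lt_or_ge q 17 with h17 | h17
  · rcases hq with hq | hq
    · exact S.eq_of_lt_seventeen K hpq hq.1 hq.2 h17
    · have := Nat.pow_le_pow_left h5 2
      omega
  have hdvd : ∀ r : ℕ, r.Prime → r < 5 → ¬ r ∣ q := by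
    intro r hr hr5 h
    rcases hq with hq | hq
    · have := (Nat.prime_dvd_prime_iff_eq hr hq.1).mp h
      omega
    · rw [hq] at h
      have := (Nat.prime_dvd_prime_iff_eq hr S.prime).mp (hr.dvd_of_dvd_pow h)
      omega
  rcases le_or_gt q 361 with h361 | h361
  · obtain ⟨a, b, n, c, ha, hb, hab, hnc, hn, hc, hcop⟩ := exists_split_small q h17 h361
      (hdvd 2 Nat.prime_two (by norm_num)) (hdvd 3 Nat.prime_three (by norm_num))
    exact S.eq_of_split K hpq hq ha hb hab hnc hn hc fun r hr _ h1 h2 =>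
      Nat.not_coprime_of_dvd_of_dvd hr.one_lt h1 h2 hcop
  · obtain ⟨n, t, hnq, hqn, -, ht, hprimes⟩ := exists_modulus q (by omega)
    have h3 : ¬ 3 ∣ n := fun h => by
      have := hprimes 3 Nat.prime_three h
      omega
    obtain ⟨a, b, c, ha, hb, hab, hnc, hc⟩ := exists_split_of_root q n t h3 hnq hqn ht
    -- `p² ≥ q > 19²`, so the prime factors `7, 13, 19` of `n` are all below `p`
    have hp19 : 19 < p := by
      have hqp : q ≤ p ^ 2 := by rcases hq with h | h; exacts [h.2, h.le]
      by_contra hle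
      have := Nat.pow_le_pow_left (not_lt.mp hle) 2
      omega
    refine S.eq_of_split K hpq hq ha hb hab hnc hnq hc fun r hr hpr h1 => ?_
    have := hprimes r hr h1
    omega

theorem fixedBelow (S : Setting f p) (q : ℕ) (hq : q ≤ p ^ 2) : FixedBelow f p q := by
  induction q with
  | zero => exact fun r _ _ h => absurd h (Nat.not_lt_zero r)
  | succ q ih =>
    have K := ih (by omega)
    intro r hr hpr hrq
    rcases Nat.lt_succ_iff_lt_or_eq.mp hrq with h | rfl
    · exact K r hr hpr h
    · exact ⟨S.eq_of_fixedBelow K hpr (Or.inl ⟨hr, by omega⟩), S.cube_eq K hpr hr (by omega)⟩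

/-- Even numbers `m ≤ p² + 3` prime to `p` are tame below `p²`: a prime factor is at most `m / 2`,
and if it exceeds `p`, its square is at least `(p + 1)² > m`. -/
theorem tame_of_even (S : Setting f p) {m : ℕ} (h0 : 0 < m) (h2 : 2 ∣ m) (hm : m ≤ p ^ 2 + 3)
    (hpm : ¬ p ∣ m) : Tame p (p ^ 2) m := by
  have h5 := S.five
  have h25 := Nat.pow_le_pow_left h5 2
  refine ⟨h0, fun r hr hd => ⟨?_, fun hpr hd2 => ?_⟩⟩
  · obtain ⟨k, rfl⟩ := hd
    rcases hr.eq_two_or_odd with rfl | hodd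
    · omega
    · have : 2 ∣ k := (Nat.prime_two.dvd_mul.mp h2).resolve_left (by omega)
      have hk : 2 ≤ k := Nat.le_of_dvd (Nat.pos_of_mul_pos_left h0) this
      nlinarith
  · have hne : p ≠ r := by rintro rfl; exact hpm hd
    have h1 := Nat.le_of_dvd h0 hd2
    have h3 : p + 1 ≤ r := by omega
    nlinarith

end Setting

/-! ### Conclusion -/

theorem cubes_two_induction_patterns (f : ℕ → ℂ)
    (hf1 : f 1 = 1)
    (hmul : ∀ m n : ℕ, 0 < m → 0 < n → Nat.Coprime m n → f (m * n) = f m * f n)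
    (hadd : ∀ a b : ℕ, 0 < a → 0 < b →
      f (a ^ 3 + b ^ 3) = f (a ^ 3) + f (b ^ 3))
    (p : ℕ) (hp : p.Prime) (hp5 : 5 ≤ p)
    (hind : ∀ q r : ℕ, q.Prime → q < p → 1 ≤ r → ¬(q = 3 ∧ r = 1) →
      f (q ^ r) = q ^ r) :
    f (p ^ 2 + 3) = ((p ^ 2 + 3 : ℕ) : ℂ) ∧
    f ((p ^ 2 + 1) ^ 3) = (((p ^ 2 + 1) ^ 3 : ℕ) : ℂ) ∧
    f (p ^ 4 + 3) = ((p ^ 4 + 3 : ℕ) : ℂ) := by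
  have S : Setting f p := ⟨hf1, hmul, hadd, hp, hp5, hind⟩
  have K : FixedBelow f p (p ^ 2) := S.fixedBelow _ le_rfl
  have hsq : f (p ^ 2) = (p : ℂ) ^ 2 := by
    exact_mod_cast S.eq_of_fixedBelow K (Nat.le_self_pow two_ne_zero p) (Or.inr rfl)
  have h25 := Nat.pow_le_pow_left hp5 2
  have hp2 : ¬ 2 ∣ p := fun h => by
    have := (Nat.prime_dvd_prime_iff_eq Nat.prime_two hp).mp h
    omega
  have hp3 : ¬ 3 ∣ p := fun h => by
    have := (Nat.prime_dvd_prime_iff_eq Nat.prime_three hp).mp h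
    omega
  have hpd : ∀ m k : ℕ, 0 < k → k < 5 → m ≠ 0 → ¬ p ∣ p ^ m + k := by
    intro m k hk hk5 hm h
    have := Nat.le_of_dvd hk ((Nat.dvd_add_right (dvd_pow_self p hm)).mp h)
    omega
  obtain ⟨s, hs⟩ : ∃ s, p ^ 2 = 2 * s + 1 := by
    obtain ⟨j, hj⟩ : ∃ j, p = 2 * j + 1 := ⟨p / 2, by omega⟩
    exact ⟨2 * j ^ 2 + 2 * j, by rw [hj]; ring⟩
  have hcube : f ((p ^ 2 + 1) ^ 3) = (((p ^ 2 + 1 : ℕ) : ℂ)) ^ 3 :=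
    S.cube_eq_of_tame K (S.tame_of_even (by omega) (by omega) (by omega)
      (hpd 2 1 (by norm_num) (by norm_num) (by norm_num)))
  refine ⟨?_, by rw [hcube]; push_cast; rfl, ?_⟩
  · refine S.eq_of_tame K (S.tame_of_even (by omega) (by omega) (by omega)
      (hpd 2 3 (by norm_num) (by norm_num) (by norm_num))) fun h => ?_
    exact absurd (Nat.prime_three.dvd_of_dvd_pow ((Nat.dvd_add_left (dvd_refl 3)).mp h)) hp3
  · obtain ⟨d, hd, hd2⟩ : ∃ d, p ^ 4 + 3 = 4 * d ∧ ¬ 2 ∣ d := by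
      have h4 : p ^ 4 = (2 * s + 1) ^ 2 := by rw [← hs]; ring
      obtain ⟨e, he⟩ : Even (s * (s + 1)) := Nat.even_mul_succ_self s
      exact ⟨2 * e + 1, by rw [h4]; linarith, by omega⟩
    have hd0 : 0 < d := by omega
    have hc : ∀ k, Nat.Coprime (2 ^ k) d := fun k =>
      Nat.Coprime.pow_left k (Nat.prime_two.coprime_iff_not_dvd.mpr hd2)
    have f2 : ∀ k, 1 ≤ k → f (2 ^ k) = 2 ^ k := fun k hk => by
      exact_mod_cast hind 2 k Nat.prime_two (by omega) hk (by omega)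
    have hpc : Nat.Coprime (p ^ 2) (2 ^ 3 * d) := by
      refine Nat.Coprime.pow_left 2 (hp.coprime_iff_not_dvd.mpr fun h => ?_)
      rw [show 2 ^ 3 * d = 2 * (p ^ 4 + 3) by omega, hp.dvd_mul] at h
      rcases h with h | h
      · have := Nat.le_of_dvd (by norm_num) h
        omega
      · exact hpd 4 3 (by norm_num) (by norm_num) (by norm_num) h
    have e := hadd (p ^ 2 + 1) (p ^ 2 - 1) (by omega) (by omega)
    have i : (p ^ 2 + 1) ^ 3 + (p ^ 2 - 1) ^ 3 = p ^ 2 * (2 ^ 3 * d) := by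
      zify [show 1 ≤ p ^ 2 by omega] at hd ⊢
      linear_combination 2 * (p : ℤ) ^ 2 * hd
    have iC : (((p ^ 2 + 1 : ℕ) : ℂ)) ^ 3 + (((p ^ 2 - 1 : ℕ) : ℂ)) ^ 3 =
        (p : ℂ) ^ 2 * (2 ^ 3 * d) := by exact_mod_cast i
    rw [hcube, S.cube_eq_of_tame K (Setting.tame_of_lt (m := p ^ 2 - 1) le_rfl (by omega)
      (by omega)), i, hmul _ _ (by omega) (by omega) hpc, hmul _ _ (by omega) hd0 (hc 3), hsq,
      f2 3 (by norm_num), iC] at e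
    have hp0 : (p : ℂ) ^ 2 * 2 ^ 3 ≠ 0 := by
      have : (p : ℂ) ≠ 0 := by exact_mod_cast hp.ne_zero
      exact mul_ne_zero (pow_ne_zero _ this) (by norm_num)
    have hfd : f d = d := mul_left_cancel₀ hp0 (by linear_combination e)
    rw [hd, show 4 * d = 2 ^ 2 * d by ring, hmul _ _ (by omega) hd0 (hc 2), f2 2 (by norm_num), hfd]
    push_cast
    ring
end

section
/- If f : ℕ → ℂ is a multiplicative function satisfying f(a³ + b³ + c³) = f(a³) + f(b³) + f(c³) for all positive integers a, b, c, then f(n) = n for each n in the set {1, 2, 8, 3, 9, 27, 5, 125, 7, 343, 11, 17, 23}. -/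
/-!
Write `x = f 8`, `y = f 27`, `z = f 64`, `w = f 125`. Since `f 43 = 2x + y`, the sums of cubes
`129 = 3 * 43` and `344 = 8 * 43` give `3y = 2x² - 6x + 1` and `z = x²`. The identity
`3³ + 4³ + 5³ = 6³` gives `w = xy - y - x²`, and the two representations
`251 = 1³ + 5³ + 5³ = 2³ + 3³ + 6³` then force `x (x - 1) (x - 8) = 0`.

The values `x = 0` and `x = 1` are excluded by determining `f 2`, `f 5`, `f 11` successively from
`258 = 2 * 3 * 43`, `10 = 2 * 5`, `55 = 5 * 11` and comparing with `66 = 2 * 3 * 11 = 1 + 1 + 4³`.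
With `x = 8` all the remaining values follow from linear equations.
-/

theorem cubes_three_small_values (f : ℕ → ℂ)
    (hf1 : f 1 = 1)
    (hmul : ∀ m n : ℕ, 0 < m → 0 < n → Nat.Coprime m n → f (m * n) = f m * f n)
    (hadd : ∀ a b c : ℕ, 0 < a → 0 < b → 0 < c →
      f (a ^ 3 + b ^ 3 + c ^ 3) = f (a ^ 3) + f (b ^ 3) + f (c ^ 3)) :
    ∀ n ∈ ({1, 2, 8, 3, 9, 27, 5, 125, 7, 343, 11, 17, 23} : Finset ℕ), f n = n := by
  have h3 : f 3 = 3 := by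
    have h := hadd 1 1 1 (by norm_num) (by norm_num) (by norm_num)
    norm_num [hf1] at h
    exact h
  -- A sum of three cubes that factors as a coprime product gives one equation in the values of `f`.
  have A : ∀ a b c m n : ℕ, 0 < a → 0 < b → 0 < c → 0 < m → 0 < n → Nat.Coprime m n →
      a ^ 3 + b ^ 3 + c ^ 3 = m * n → f m * f n = f (a ^ 3) + f (b ^ 3) + f (c ^ 3) := by
    intro a b c m n ha hb hc hm hn hco h
    rw [← hmul m n hm hn hco, ← h, hadd a b c ha hb hc]
  have e216 : f 216 = f 8 * f 27 := hmul 8 27 (by norm_num) (by norm_num) (by norm_num)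
  have e6 : f 6 = f 2 * f 3 := hmul 2 3 (by norm_num) (by norm_num) (by norm_num)
  have e54 : f 54 = f 2 * f 27 := hmul 2 27 (by norm_num) (by norm_num) (by norm_num)
  have e15 : f 15 = f 3 * f 5 := hmul 3 5 (by norm_num) (by norm_num) (by norm_num)
  have s10 := A 1 1 2 2 5 (by norm_num) (by norm_num) (by norm_num) (by norm_num) (by norm_num)
    (by norm_num) (by norm_num)
  have s17 := hadd 1 2 2 (by norm_num) (by norm_num) (by norm_num)
  have s43 := hadd 2 2 3 (by norm_num) (by norm_num) (by norm_num)
  have s55 := A 1 3 3 5 11 (by norm_num) (by norm_num) (by norm_num) (by norm_num) (by norm_num)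
    (by norm_num) (by norm_num)
  have s66 := A 1 1 4 6 11 (by norm_num) (by norm_num) (by norm_num) (by norm_num) (by norm_num)
    (by norm_num) (by norm_num)
  have s99 := A 2 3 4 9 11 (by norm_num) (by norm_num) (by norm_num) (by norm_num) (by norm_num)
    (by norm_num) (by norm_num)
  have s129 := A 1 4 4 3 43 (by norm_num) (by norm_num) (by norm_num) (by norm_num) (by norm_num)
    (by norm_num) (by norm_num)
  have s216 := A 3 4 5 8 27 (by norm_num) (by norm_num) (by norm_num) (by norm_num) (by norm_num)
    (by norm_num) (by norm_num)
  have s251 := hadd 1 5 5 (by norm_num) (by norm_num) (by norm_num)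
  have s251' := hadd 2 3 6 (by norm_num) (by norm_num) (by norm_num)
  have s253 := A 4 4 5 11 23 (by norm_num) (by norm_num) (by norm_num) (by norm_num) (by norm_num)
    (by norm_num) (by norm_num)
  have s258 := A 2 5 5 6 43 (by norm_num) (by norm_num) (by norm_num) (by norm_num) (by norm_num)
    (by norm_num) (by norm_num)
  have s344 := A 4 4 6 8 43 (by norm_num) (by norm_num) (by norm_num) (by norm_num) (by norm_num)
    (by norm_num) (by norm_num)
  have s345 := A 1 1 7 15 23 (by norm_num) (by norm_num) (by norm_num) (by norm_num) (by norm_num)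
    (by norm_num) (by norm_num)
  have s378 := A 2 3 7 54 7 (by norm_num) (by norm_num) (by norm_num) (by norm_num) (by norm_num)
    (by norm_num) (by norm_num)
  simp only [Nat.reducePow, Nat.reduceAdd, hf1, h3, e216, e6, e54, e15] at s10 s17 s43 s55 s66 s99 s129
  simp only [Nat.reducePow, Nat.reduceAdd, hf1, h3, e216, e6, e54, e15] at s216 s251 s251' s253
  simp only [Nat.reducePow, Nat.reduceAdd, hf1, h3, e216, e6, e54, e15] at s258 s344 s345 s378
  rw [s43] at s129 s258 s344
  rw [s251] at s251'
  have hz : f 64 = f 8 ^ 2 := by linear_combination (-1 / 2) * s344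
  have hy : f 27 = (2 * f 8 ^ 2 - 6 * f 8 + 1) / 3 := by
    linear_combination (1 / 3) * s129 + (2 / 3) * hz
  have hw : f 125 = f 8 * f 27 - f 27 - f 8 ^ 2 := by linear_combination -s216 - hz
  have hx : f 8 * ((f 8 - 1) * (f 8 - 8)) = 0 := by
    rw [hw, hy] at s251'
    linear_combination (3 / 2) * s251'
  have hx8 : f 8 = 8 := by
    rcases mul_eq_zero.mp hx with h | h
    · exfalso
      rw [h] at hy hz
      norm_num at hy hz
      rw [h, hy] at hw
      norm_num at hw
      rw [h, hy, hw] at s258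
      have h2 : f 2 = -2 / 3 := by linear_combination s258
      rw [h, h2] at s10
      have h5 : f 5 = -3 := by linear_combination (-3 / 2) * s10
      rw [h5, hy] at s55
      have h11 : f 11 = -5 / 9 := by linear_combination (-1 / 3) * s55
      rw [h2, h11, hz] at s66
      norm_num at s66
    rcases mul_eq_zero.mp h with h | h
    · exfalso
      replace h : f 8 = 1 := by linear_combination h
      rw [h] at hy hz
      norm_num at hy hz
      rw [h, hy] at hw
      norm_num at hw
      rw [h, hy, hw] at s258
      have h2 : f 2 = -1 / 3 := by linear_combination (1 / 3) * s258
      rw [h, h2] at s10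
      have h5 : f 5 = -9 := by linear_combination (-3) * s10
      rw [h5, hy] at s55
      have h11 : f 11 = 1 / 9 := by linear_combination (-1 / 9) * s55
      rw [h2, h11, hz] at s66
      norm_num at s66
    · linear_combination h
  rw [hx8] at hy hz hw
  norm_num at hy hz
  rw [hy] at hw
  norm_num at hw
  rw [hx8, hy, hw] at s258
  have h2 : f 2 = 2 := by linear_combination (1 / 129) * s258
  rw [hx8, h2] at s10
  have h5 : f 5 = 5 := by linear_combination (1 / 2) * s10
  rw [h5, hy] at s55
  have h11 : f 11 = 11 := by linear_combination (1 / 5) * s55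
  rw [h11, hx8, hy, hz] at s99
  have h9 : f 9 = 9 := by linear_combination (1 / 11) * s99
  rw [hx8] at s17
  have h17 : f 17 = 17 := by linear_combination s17
  rw [h11, hz, hw] at s253
  have h23 : f 23 = 23 := by linear_combination (1 / 11) * s253
  rw [h5, h23] at s345
  have h343 : f 343 = 343 := by linear_combination -s345
  rw [h2, hx8, hy, h343] at s378
  have h7 : f 7 = 7 := by linear_combination (1 / 54) * s378
  intro n hn
  simp only [Finset.mem_insert, Finset.mem_singleton] at hn
  rcases hn with rfl | rfl | rfl | rfl | rfl | rfl | rfl | rfl | rfl | rfl | rfl | rfl | rfl <;>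
    simp only [hf1, h2, hx8, h3, h9, hy, h5, hw, h7, h343, h11, h17, h23] <;> norm_num
end

section
/- If f : ℕ → ℂ is a multiplicative function satisfying f(a³ + b³ + c³) = f(a³) + f(b³) + f(c³) for all positive integers a, b, c, then f(n³) = n³ for every positive integer n. -/
/-!
Put `g n = f (n ^ 3)`. Two equal sums of three positive cubes give a linear relation between
values of `g`, and since `f 3 = f (1 + 1 + 1) = 3`, so does every equation
`3 * (a ^ 3 + b ^ 3 + c ^ 3) = d ^ 3 + e ^ 3 + k ^ 3` in which the bracket is prime to `3`.

* Fourteen such relations among `g 1, …, g 15` form a linear system whose only solution with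
  `g 1 = 1` is `g n = n ^ 3` (`cube_values_small`).
* For larger `n` strong induction applies as soon as `n ^ 3 + b ^ 3 + c ^ 3 = d ^ 3 + e ^ 3 + k ^ 3`
  with all other entries positive and smaller than `n` (`cube_step`). The identity
  `(3t + 4)³ + (2t - 9)³ + 11³ = (3t - 4)³ + (2t + 9)³ + 1`, a rational line on the cubic fourfold
  of equal sums of three cubes, and its rescalings by `2` and `3` cover the residue classes of
  `n` modulo `3` once `n ≥ 60`; the values `16 ≤ n < 60` use individual identities.
-/

/-- Equal sums of three cubes transfer the claim from smaller arguments to `n`. -/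
lemma cube_step (f : ℕ → ℂ)
    (hadd : ∀ a b c : ℕ, 0 < a → 0 < b → 0 < c →
      f (a ^ 3 + b ^ 3 + c ^ 3) = f (a ^ 3) + f (b ^ 3) + f (c ^ 3))
    (n : ℕ) (ih : ∀ m < n, 0 < m → f (m ^ 3) = ((m ^ 3 : ℕ) : ℂ))
    (b c d e k : ℕ) (hb : 0 < b ∧ b < n) (hc : 0 < c ∧ c < n) (hd : 0 < d ∧ d < n)
    (he : 0 < e ∧ e < n) (hk : 0 < k ∧ k < n)
    (h : n ^ 3 + b ^ 3 + c ^ 3 = d ^ 3 + e ^ 3 + k ^ 3) :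
    f (n ^ 3) = ((n ^ 3 : ℕ) : ℂ) := by
  have h1 := hadd n b c (by omega) hb.1 hc.1
  rw [h, hadd d e k hd.1 he.1 hk.1, ih b hb.2 hb.1, ih c hc.2 hc.1, ih d hd.2 hd.1,
    ih e he.2 he.1, ih k hk.2 hk.1] at h1
  have h2 := congrArg (Nat.cast : ℕ → ℂ) h
  push_cast at h1 h2 ⊢
  linear_combination -h2 - h1

lemma cube_values_small (f : ℕ → ℂ)
    (hf1 : f 1 = 1)
    (hmul : ∀ m n : ℕ, 0 < m → 0 < n → Nat.Coprime m n → f (m * n) = f m * f n)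
    (hadd : ∀ a b c : ℕ, 0 < a → 0 < b → 0 < c →
      f (a ^ 3 + b ^ 3 + c ^ 3) = f (a ^ 3) + f (b ^ 3) + f (c ^ 3))
    (n : ℕ) (hn : 0 < n) (hn' : n < 16) : f (n ^ 3) = ((n ^ 3 : ℕ) : ℂ) := by
  have h3 : f 3 = 3 := by
    have := hadd 1 1 1 one_pos one_pos one_pos
    norm_num [hf1] at this
    exact this
  have heq (a b c d e k : ℕ)
      (h : a ^ 3 + b ^ 3 + c ^ 3 = d ^ 3 + e ^ 3 + k ^ 3 := by norm_num)
      (ha : 0 < a := by simp) (hb : 0 < b := by simp)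
      (hc : 0 < c := by simp) (hd : 0 < d := by simp) (he : 0 < e := by simp)
      (hk : 0 < k := by simp) :
      f (a ^ 3) + f (b ^ 3) + f (c ^ 3) = f (d ^ 3) + f (e ^ 3) + f (k ^ 3) := by
    rw [← hadd a b c ha hb hc, h, hadd d e k hd he hk]
  have htriple (a b c d e k : ℕ)
      (h : 3 * (a ^ 3 + b ^ 3 + c ^ 3) = d ^ 3 + e ^ 3 + k ^ 3 := by norm_num)
      (hco : Nat.Coprime 3 (a ^ 3 + b ^ 3 + c ^ 3) := by norm_num)
      (ha : 0 < a := by simp) (hb : 0 < b := by simp)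
      (hc : 0 < c := by simp) (hd : 0 < d := by simp) (he : 0 < e := by simp)
      (hk : 0 < k := by simp) :
      3 * (f (a ^ 3) + f (b ^ 3) + f (c ^ 3)) = f (d ^ 3) + f (e ^ 3) + f (k ^ 3) := by
    rw [← hadd a b c ha hb hc, ← hadd d e k hd he hk, ← h,
      hmul 3 _ (by norm_num) (by positivity) hco, h3]
  have g1 : f (1 ^ 3) = 1 := by simpa using hf1
  have e1 := htriple 2 2 3 1 4 4
  have e2 := htriple 2 4 4 1 4 7
  have e3 := htriple 4 4 6 2 8 8
  have e4 := htriple 1 5 7 4 7 10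
  have e5 := htriple 6 6 7 4 4 13
  have e6 := htriple 4 8 8 2 8 14
  have e7 := heq 1 5 5 2 3 6
  have e8 := heq 1 2 10 4 6 9
  have e9 := heq 1 9 9 4 4 11
  have e10 := heq 1 5 11 6 8 9
  have e11 := heq 1 1 12 1 9 10
  have e12 := heq 2 3 12 6 6 11
  have e13 := heq 2 2 15 9 11 11
  have e14 := heq 2 13 13 3 10 15
  rw [g1] at *
  clear heq htriple hadd hmul h3
  interval_cases n <;> grind

theorem cubes_three_fixes_cubes (f : ℕ → ℂ)
    (hf1 : f 1 = 1)
    (hmul : ∀ m n : ℕ, 0 < m → 0 < n → Nat.Coprime m n → f (m * n) = f m * f n)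
    (hadd : ∀ a b c : ℕ, 0 < a → 0 < b → 0 < c →
      f (a ^ 3 + b ^ 3 + c ^ 3) = f (a ^ 3) + f (b ^ 3) + f (c ^ 3)) :
    ∀ n : ℕ, 0 < n → f (n ^ 3) = ((n ^ 3 : ℕ) : ℂ) := by
  intro n
  induction n using Nat.strong_induction_on with
  | _ n ih =>
  intro hn
  have step := cube_step f hadd n ih
  rcases lt_or_ge n 16 with h16 | h16
  · exact cube_values_small f hf1 hmul hadd n hn h16
  rcases lt_or_ge n 60 with h60 | h60
  · interval_cases n
    · apply step 1 2 1 9 15 <;> simp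
    · apply step 1 2 6 11 15 <;> simp
    · apply step 9 12 1 15 17 <;> simp
    · apply step 8 15 1 17 18 <;> simp
    · apply step 1 6 3 11 19 <;> simp
    · apply step 7 20 17 18 19 <;> simp
    · apply step 1 2 9 16 18 <;> simp
    · apply step 1 2 8 18 18 <;> simp
    · apply step 1 2 1 18 20 <;> simp
    · apply step 1 5 12 15 22 <;> simp
    · apply step 1 3 17 18 19 <;> simp
    · apply step 1 4 3 16 25 <;> simp
    · apply step 1 7 10 22 22 <;> simp
    · apply step 1 2 4 23 23 <;> simp
    · apply step 1 1 9 22 25 <;> simp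
    · apply step 1 5 15 19 27 <;> simp
    · apply step 1 4 1 18 30 <;> simp
    · apply step 1 2 16 23 27 <;> simp
    · apply step 1 2 1 15 33 <;> simp
    · apply step 1 3 15 26 28 <;> simp
    · apply step 1 3 7 28 29 <;> simp
    · apply step 1 2 22 25 29 <;> simp
    · apply step 1 1 5 16 37 <;> simp
    · apply step 7 21 16 28 35 <;> simp
    · apply step 1 2 12 25 36 <;> simp
    · apply step 1 1 16 28 35 <;> simp
    · apply step 1 7 16 27 37 <;> simp
    · apply step 1 5 2 25 40 <;> simp
    · apply step 20 22 14 30 42 <;> simp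
    · apply step 1 11 14 25 42 <;> simp
    · apply step 17 36 9 42 42 <;> simp
    · apply step 1 2 14 30 42 <;> simp
    · apply step 1 4 1 36 40 <;> simp
    · apply step 1 11 7 39 39 <;> simp
    · apply step 1 4 9 30 46 <;> simp
    · apply step 1 12 1 38 43 <;> simp
    · apply step 1 1 34 37 37 <;> simp
    · apply step 1 3 9 42 42 <;> simp
    · apply step 1 8 9 36 48 <;> simp
    · apply step 1 2 19 22 53 <;> simp
    · apply step 1 3 2 21 55 <;> simp
    · apply step 1 5 10 39 50 <;> simp
    · apply step 1 2 16 18 57 <;> simp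
    · apply step 1 2 8 27 57 <;> simp
  · obtain ⟨s, hs⟩ : ∃ s, n = 3 * s + 60 ∨ n = 3 * s + 61 ∨ n = 3 * s + 62 :=
      ⟨(n - 60) / 3, by omega⟩
    rcases hs with rfl | rfl | rfl
    · -- the identity scaled by `3`, at `3t = s + 16`
      exact step (2 * s + 5) 33 (3 * s + 36) (2 * s + 59) 3 (by omega) (by omega) (by omega)
        (by omega) (by omega) (by ring)
    · -- the identity itself, at `t = s + 19`
      exact step (2 * s + 29) 11 (3 * s + 53) (2 * s + 47) 1 (by omega) (by omega) (by omega)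
        (by omega) (by omega) (by ring)
    · -- the identity scaled by `2`, at `2t = s + 18`
      exact step (2 * s + 18) 22 (3 * s + 46) (2 * s + 54) 2 (by omega) (by omega) (by omega)
        (by omega) (by omega) (by ring)
end
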